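/- Let E be a rank two bundle on P^n with minimal monad 0 → A → P → B → 0 (A, B free), let N_t = H^t_*(E), A = H^0_*(A-bundle), B = H^0_*(B-bundle). For 2 ≤ t ≤ n-2 there is an exact sequence of graded S-modules A ⊗ N_t → H^t_*(Λ²P) → B ⊗ N_t, which is injective on the left if t ≥ 3 and N_{t-1} = 0, and surjective on the right if t ≤ n-3 and N_{t+1} = 0. -/

import Mathlib

/-!
Background setup (the paper works on projective space `ℙⁿ` over a field `K`):
we encode a coherent sheaf on `ℙⁿ_K` by a module `M` over the homogeneous coordinate
ring `S = K[X₀,…,Xₙ]` (namely `M = Γ_*` of the sheaf), and the intermediate cohomology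
module `H^i_*(F) = ⊕_ν H^i(ℙⁿ, F(ν))` (for `i ≥ 1`) by the local cohomology module
`H^{i+1}_𝔪(M)` at the irrelevant maximal ideal `𝔪 = (X₀,…,Xₙ)`, to which it is
canonically isomorphic.
-/

open CategoryTheory TensorProduct

noncomputable section

/-- The homogeneous coordinate ring `S = K[X₀,…,Xₙ]` of `ℙⁿ`. -/
abbrev PolyS (K : Type) [Field K] (n : ℕ) : Type := MvPolynomial (Fin (n+1)) K

variable (K : Type) [Field K] (n : ℕ)

/-- The irrelevant maximal ideal `𝔪 = (X₀,…,Xₙ)` of `S`. -/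
def irrel : Ideal (PolyS K n) := Ideal.span (Set.range MvPolynomial.X)

/-- `H^i_*` of the sheaf on `ℙⁿ` associated to the `S`-module `M`, encoded (for `i ≥ 1`)
as the local cohomology module `H^{i+1}_𝔪(M)`. -/
def Hstar (i : ℕ) (M : Type) [AddCommGroup M] [Module (PolyS K n) M] :
    ModuleCat (PolyS K n) :=
  (localCohomology (irrel K n) (i+1)).obj (ModuleCat.of (PolyS K n) M)

/-- `M` is (the module of sections `Γ_*` of) an algebraic vector bundle on `ℙⁿ`:
finitely generated, depth `≥ 2` at `𝔪` (i.e. `H⁰_𝔪(M) = H¹_𝔪(M) = 0`, so `M = Γ_*(M̃)`),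
and locally free at every prime other than the irrelevant ideal. -/
structure IsBundleModule (M : Type) [AddCommGroup M] [Module (PolyS K n) M] : Prop where
  finite : Module.Finite (PolyS K n) M
  h0 : Subsingleton ((localCohomology (irrel K n) 0).obj (ModuleCat.of (PolyS K n) M))
  h1 : Subsingleton ((localCohomology (irrel K n) 1).obj (ModuleCat.of (PolyS K n) M))
  locFree : ∀ p : PrimeSpectrum (PolyS K n), p.asIdeal ≠ irrel K n →
    Module.Free (Localization.AtPrime p.asIdeal) (LocalizedModule p.asIdeal.primeCompl M)

/-- `M` represents a vector bundle of rank two on `ℙⁿ`. -/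
structure IsRankTwoBundleModule (M : Type) [AddCommGroup M] [Module (PolyS K n) M]
    extends IsBundleModule K n M : Prop where
  rank2 : ∀ p : PrimeSpectrum (PolyS K n), p.asIdeal ≠ irrel K n →
    Module.rank (Localization.AtPrime p.asIdeal) (LocalizedModule p.asIdeal.primeCompl M) = 2

/-- A finite length module which is moreover supported at the irrelevant ideal: the
(ungraded avatar of the) notion of a *graded* `S`-module of finite length. -/
def IsGradedFiniteLength (N : Type) [AddCommGroup N] [Module (PolyS K n) N] : Prop :=
  IsFiniteLength (PolyS K n) N ∧
    ∃ c : ℕ, (irrel K n) ^ c ≤ Module.annihilator (PolyS K n) N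

/-- The cohomology `ker β / im α` of a monad `A --α--> P --β--> B`. -/
def MonadHomology {R A P B : Type} [CommRing R] [AddCommGroup A] [Module R A]
    [AddCommGroup P] [Module R P] [AddCommGroup B] [Module R B]
    (α : A →ₗ[R] P) (β : P →ₗ[R] B) : Type :=
  ↥(LinearMap.ker β) ⧸ (LinearMap.range α).comap (LinearMap.ker β).subtype

instance {R A P B : Type} [CommRing R] [AddCommGroup A] [Module R A]
    [AddCommGroup P] [Module R P] [AddCommGroup B] [Module R B]
    (α : A →ₗ[R] P) (β : P →ₗ[R] B) : AddCommGroup (MonadHomology α β) := by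
  unfold MonadHomology; infer_instance

instance {R A P B : Type} [CommRing R] [AddCommGroup A] [Module R A]
    [AddCommGroup P] [Module R P] [AddCommGroup B] [Module R B]
    (α : A →ₗ[R] P) (β : P →ₗ[R] B) : Module R (MonadHomology α β) := by
  unfold MonadHomology; infer_instance

/-- A linear map of `S`-modules which becomes an isomorphism of the associated sheaves
on `ℙⁿ`: its kernel and cokernel are annihilated by a power of the irrelevant ideal. -/
def IsSheafIso {M N' : Type} [AddCommGroup M] [Module (PolyS K n) M]
    [AddCommGroup N'] [Module (PolyS K n) N'] (f : M →ₗ[PolyS K n] N') : Prop :=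
  (∃ c : ℕ, (irrel K n) ^ c ≤ Module.annihilator (PolyS K n) ↥(LinearMap.ker f)) ∧
  (∃ c : ℕ, (irrel K n) ^ c ≤ Module.annihilator (PolyS K n) (N' ⧸ LinearMap.range f))

/-!
Let `G = ker (P → B)` and let `E` be the homology of the monad. Away from `V(𝔪)` the display
`0 → G → P → B → 0`, `0 → A → G → E → 0` is locally split, so up to `𝔪`-power torsion there are
exact sequences `0 → Λ²G → Λ²P → B ⊗ P → S²B → 0` and `0 → D²A → A ⊗ G → Λ²G → Λ²E → 0`, with `D²`
the divided square (which keeps the argument valid in characteristic two). Local cohomology in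
degrees at least two does not see `𝔪`-power torsion. Free modules have no intermediate cohomology,
and neither has `Λ²E`, which is a line bundle over a factorial ring and hence trivial. Therefore
`H^t_*(Λ²G) ≅ A ⊗ N_t`, and the kernel of `B ⊗ P → S²B` has `H^t_*` isomorphic to `B ⊗ N_t`; the
exact sequence is the long exact cohomology sequence of
`0 → Λ²G → Λ²P → ker (B ⊗ P → S²B) → 0`.
-/

section Ext

open Limits Opposite

universe v u w

variable {R : Type w} [CommRing R] {C : Type u} [Category.{v} C] [Abelian C] [Linear R C]

section HomComplex

variable (R) in
/-- The map `Hom(X, Y) ⟶ Hom(X, Y')` of Hom complexes induced by `g : Y ⟶ Y'`. -/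
def homComplexMap (X : ChainComplex C ℕ) {Y Y' : C} (g : Y ⟶ Y') :
    X.linearYonedaObj R Y ⟶ X.linearYonedaObj R Y' :=
  (HomologicalComplex.unopFunctor _ _).map
    ((NatTrans.mapHomologicalComplex (NatTrans.rightOp ((linearYoneda R C).map g))
      (ComplexShape.down ℕ)).app X).op

variable (R) in
/-- The map `Hom(X', Y) ⟶ Hom(X, Y)` of Hom complexes induced by a chain map `φ : X ⟶ X'`. -/
def homComplexPrecomp {X X' : ChainComplex C ℕ} (φ : X ⟶ X') (Y : C) :
    X'.linearYonedaObj R Y ⟶ X.linearYonedaObj R Y :=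
  (HomologicalComplex.unopFunctor _ _).map
    ((((linearYoneda R C).obj Y).rightOp.mapHomologicalComplex (ComplexShape.down ℕ)).map φ).op

lemma homComplexMap_comp (X : ChainComplex C ℕ) {Y Y' Y'' : C} (g : Y ⟶ Y') (h : Y' ⟶ Y'') :
    homComplexMap R X (g ≫ h) = homComplexMap R X g ≫ homComplexMap R X h := by
  ext i x
  exact (Category.assoc (x : X.X i ⟶ Y) g h).symm

lemma homComplexMap_zero (X : ChainComplex C ℕ) (Y Y' : C) :
    homComplexMap R X (0 : Y ⟶ Y') = 0 := by
  ext i x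
  exact comp_zero (f := (x : X.X i ⟶ Y))

lemma homComplexMap_add (X : ChainComplex C ℕ) {Y Y' : C} (g h : Y ⟶ Y') :
    homComplexMap R X (g + h) = homComplexMap R X g + homComplexMap R X h := by
  ext i x
  exact Preadditive.comp_add _ _ _ (x : X.X i ⟶ Y) g h

lemma homComplexMap_smul (X : ChainComplex C ℕ) {Y Y' : C} (r : R) (g : Y ⟶ Y') :
    homComplexMap R X (r • g) = r • homComplexMap R X g := by
  ext i x
  exact Linear.comp_smul _ _ _ (x : X.X i ⟶ Y) r g

lemma homComplexPrecomp_smul_id (X : ChainComplex C ℕ) (Y : C) (r : R) :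
    homComplexPrecomp R (r • 𝟙 X) Y = r • 𝟙 _ := by
  ext i x
  have h : (r • 𝟙 (X.X i)) ≫ (show X.X i ⟶ Y from x) = r • (show X.X i ⟶ Y from x) := by
    rw [Linear.smul_comp, Category.id_comp]
  exact h

lemma homComplexPrecomp_zero (X X' : ChainComplex C ℕ) (Y : C) :
    homComplexPrecomp R (0 : X ⟶ X') Y = 0 := by
  ext i x
  exact zero_comp (f := (x : X'.X i ⟶ Y))

variable (R) in
/-- The complex `Hom(X, S.X₁) ⟶ Hom(X, S.X₂) ⟶ Hom(X, S.X₃)` of Hom complexes. -/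
@[simps]
def homComplexShortComplex (X : ChainComplex C ℕ) (S : ShortComplex C) :
    ShortComplex (CochainComplex (ModuleCat R) ℕ) where
  f := homComplexMap R X S.f
  g := homComplexMap R X S.g
  zero := by rw [← homComplexMap_comp, S.zero, homComplexMap_zero]

variable (R) in
/-- The morphism of short complexes of Hom complexes induced by a chain map. -/
@[simps]
def homComplexShortComplexPrecomp {X X' : ChainComplex C ℕ} (φ : X ⟶ X') (S : ShortComplex C) :
    homComplexShortComplex R X' S ⟶ homComplexShortComplex R X S where
  τ₁ := homComplexPrecomp R φ S.X₁
  τ₂ := homComplexPrecomp R φ S.X₂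
  τ₃ := homComplexPrecomp R φ S.X₃
  comm₁₂ := by ext i x; exact Category.assoc (φ.f i) (x : X'.X i ⟶ S.X₁) S.f
  comm₂₃ := by ext i x; exact Category.assoc (φ.f i) (x : X'.X i ⟶ S.X₂) S.g

lemma homComplexShortComplex_shortExact (X : ChainComplex C ℕ) [∀ i, Projective (X.X i)]
    {S : ShortComplex C} (hS : S.ShortExact) : (homComplexShortComplex R X S).ShortExact := by
  refine HomologicalComplex.shortExact_of_degreewise_shortExact _ fun i ↦ ?_
  have := hS.mono_f
  have := hS.epi_g
  refine ShortComplex.ShortExact.mk' ?_ ?_ ?_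
  · rw [ShortComplex.ShortExact.moduleCat_exact_iff_function_exact]
    refine fun x ↦ ⟨fun hx ↦
      ⟨hS.exact.lift (x : X.X i ⟶ S.X₂) hx, hS.exact.lift_f _ _⟩, ?_⟩
    rintro ⟨y, rfl⟩
    have hy (y : X.X i ⟶ S.X₁) : (y ≫ S.f) ≫ S.g = 0 := by simp
    exact hy y
  · exact (ModuleCat.mono_iff_injective _).2 fun x y h ↦ (cancel_mono S.f).1 h
  · exact (ModuleCat.epi_iff_surjective _).2 fun x ↦
      ⟨Projective.factorThru (x : X.X i ⟶ S.X₃) S.g, Projective.factorThru_comp _ _⟩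

variable (R) in
/-- The connecting map on the cohomology of Hom complexes out of degreewise projective ones. -/
def homComplexδ (X : ChainComplex C ℕ) [∀ i, Projective (X.X i)] {S : ShortComplex C}
    (hS : S.ShortExact) (n : ℕ) :
    (X.linearYonedaObj R S.X₃).homology n ⟶ (X.linearYonedaObj R S.X₁).homology (n + 1) :=
  (homComplexShortComplex_shortExact X hS).δ n (n + 1) rfl

lemma homComplexδ_naturality {X X' : ChainComplex C ℕ} [∀ i, Projective (X.X i)]
    [∀ i, Projective (X'.X i)] (φ : X ⟶ X') {S : ShortComplex C} (hS : S.ShortExact) (n : ℕ) :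
    HomologicalComplex.homologyMap (homComplexPrecomp R φ S.X₃) n ≫ homComplexδ R X hS n =
      homComplexδ R X' hS n ≫
        HomologicalComplex.homologyMap (homComplexPrecomp R φ S.X₁) (n + 1) :=
  (HomologicalComplex.HomologySequence.δ_naturality (homComplexShortComplexPrecomp R φ S)
    (homComplexShortComplex_shortExact X' hS) (homComplexShortComplex_shortExact X hS)
    n (n + 1) rfl).symm

end HomComplex

lemma homologyMap_unop_comp_homologyUnop_inv {V : Type*} [Category V] [Abelian V] {ι : Type*}
    {c : ComplexShape ι} {K L : HomologicalComplex Vᵒᵖ c} (φ : K ⟶ L) (i : ι) :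
    (HomologicalComplex.homologyMap φ i).unop ≫ (HomologicalComplex.homologyUnop K i).inv =
      (HomologicalComplex.homologyUnop L i).inv ≫
        HomologicalComplex.homologyMap ((HomologicalComplex.unopFunctor V c).map φ.op) i := by
  have h := congrArg Quiver.Hom.unop (HomologicalComplex.homologyOp_hom_naturality
    ((HomologicalComplex.unopFunctor V c).map φ.op) i)
  exact (CommSq.vert_inv (g := L.homologyUnop i) (h := K.homologyUnop i) ⟨h.symm⟩).w

lemma homologyMap_smul {V : Type*} [Category V] [Preadditive V] [CategoryWithHomology V]
    [Linear R V] {ι : Type*} {c : ComplexShape ι} {K L : HomologicalComplex V c}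
    (r : R) (φ : K ⟶ L) (i : ι) :
    HomologicalComplex.homologyMap (r • φ) i = r • HomologicalComplex.homologyMap φ i :=
  ShortComplex.homologyMap_smul ((HomologicalComplex.shortComplexFunctor _ c i).map φ) r

variable [EnoughProjectives C]

lemma isoExt_hom_naturality_right {X : C} (P : ProjectiveResolution X) (n : ℕ) {Y Y' : C}
    (g : Y ⟶ Y') :
    ((Ext R C n).obj (op X)).map g ≫ (P.isoExt n Y').hom =
      (P.isoExt n Y).hom ≫ HomologicalComplex.homologyMap (homComplexMap R P.complex g) n := by
  have h : (P.isoLeftDerivedObj ((linearYoneda R C).obj Y').rightOp n).inv ≫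
      (NatTrans.leftDerived (NatTrans.rightOp ((linearYoneda R C).map g)) n).app X =
      _ ≫ (P.isoLeftDerivedObj ((linearYoneda R C).obj Y).rightOp n).inv :=
    (Iso.inv_comp_eq _).2 (ProjectiveResolution.leftDerived_app_eq _ P n)
  have h' := congrArg Quiver.Hom.unop h
  have h2 := homologyMap_unop_comp_homologyUnop_inv ((NatTrans.mapHomologicalComplex
    (NatTrans.rightOp ((linearYoneda R C).map g)) (ComplexShape.down ℕ)).app P.complex) n
  change ((NatTrans.leftDerived (NatTrans.rightOp ((linearYoneda R C).map g)) n).app X).unop ≫ _ =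
    _
  simp only [unop_comp] at h'
  simp only [ProjectiveResolution.isoExt]
  erw [reassoc_of% h', h2]
  rfl

lemma isoExt_hom_naturality_left {X X' : C} {P : ProjectiveResolution X}
    {P' : ProjectiveResolution X'} {f : X ⟶ X'} (φ : P.complex ⟶ P'.complex)
    (hφ : φ.f 0 ≫ P'.π.f 0 = P.π.f 0 ≫ f) (n : ℕ) (Y : C) :
    ((Ext R C n).map f.op).app Y ≫ (P.isoExt n Y).hom =
      (P'.isoExt n Y).hom ≫ HomologicalComplex.homologyMap (homComplexPrecomp R φ Y) n := by
  have h := congrArg Quiver.Hom.unop <| ProjectiveResolution.isoLeftDerivedObj_inv_naturality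
    f P P' φ hφ ((linearYoneda R C).obj Y).rightOp n
  have h2 := homologyMap_unop_comp_homologyUnop_inv
    ((((linearYoneda R C).obj Y).rightOp.mapHomologicalComplex (ComplexShape.down ℕ)).map φ) n
  change ((((linearYoneda R C).obj Y).rightOp.leftDerived n).map f).unop ≫ _ = _
  simp only [unop_comp] at h
  simp only [ProjectiveResolution.isoExt]
  erw [reassoc_of% h, h2]
  rfl

lemma function_exact_of_iso {A B L A' B' L' : ModuleCat.{v} R} {f : A ⟶ B} {g : B ⟶ L}
    {f' : A' ⟶ B'} {g' : B' ⟶ L'} {w' : f' ≫ g' = 0} (h : (ShortComplex.mk f' g' w').Exact)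
    (e₁ : A ≅ A') (e₂ : B ≅ B') (e₃ : L ≅ L') (h₁ : f ≫ e₂.hom = e₁.hom ≫ f')
    (h₂ : g ≫ e₃.hom = e₂.hom ≫ g') : Function.Exact f g := by
  have w : f ≫ g = 0 := by
    rw [← cancel_mono e₃.hom, Category.assoc, h₂, reassoc_of% h₁, w', comp_zero, zero_comp]
  exact (ShortComplex.ShortExact.moduleCat_exact_iff_function_exact (.mk f g w)).1
    ((ShortComplex.exact_iff_of_iso (ShortComplex.isoMk e₁ e₂ e₃ h₁.symm h₂.symm)).2 h)

section LongExactSequence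

variable (R) in
/-- The connecting map of the long exact sequence of `Ext R C _ X -`. -/
def extδ (X : C) {S : ShortComplex C} (hS : S.ShortExact) (n : ℕ) :
    ((Ext R C n).obj (op X)).obj S.X₃ ⟶ ((Ext R C (n + 1)).obj (op X)).obj S.X₁ :=
  ((projectiveResolution X).isoExt n S.X₃).hom ≫
    homComplexδ R (projectiveResolution X).complex hS n ≫
    ((projectiveResolution X).isoExt (n + 1) S.X₁).inv

variable (X : C) {S : ShortComplex C}

lemma ext_exact₂ (hS : S.ShortExact) (n : ℕ) :
    Function.Exact (((Ext R C n).obj (op X)).map S.f) (((Ext R C n).obj (op X)).map S.g) :=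
  let P := projectiveResolution X
  function_exact_of_iso ((homComplexShortComplex_shortExact P.complex hS).homology_exact₂ n)
    (P.isoExt n _) (P.isoExt n _) (P.isoExt n _) (isoExt_hom_naturality_right P n S.f)
    (isoExt_hom_naturality_right P n S.g)

variable (hS : S.ShortExact) (n : ℕ)

lemma extδ_comp_isoExt_hom : extδ R X hS n ≫
    ((projectiveResolution X).isoExt (n + 1) S.X₁).hom =
      ((projectiveResolution X).isoExt n S.X₃).hom ≫
        homComplexδ R (projectiveResolution X).complex hS n := by
  simp only [extδ, Category.assoc, Iso.inv_hom_id, Category.comp_id]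

lemma ext_exact₃ : Function.Exact (((Ext R C n).obj (op X)).map S.g) (extδ R X hS n) :=
  let P := projectiveResolution X
  function_exact_of_iso
    ((homComplexShortComplex_shortExact P.complex hS).homology_exact₃ n (n + 1) rfl)
    (P.isoExt n _) (P.isoExt n _) (P.isoExt (n + 1) _) (isoExt_hom_naturality_right P n S.g)
    (extδ_comp_isoExt_hom X hS n)

lemma ext_exact₁ : Function.Exact (extδ R X hS n) (((Ext R C (n + 1)).obj (op X)).map S.f) :=
  let P := projectiveResolution X
  function_exact_of_iso
    ((homComplexShortComplex_shortExact P.complex hS).homology_exact₁ n (n + 1) rfl)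
    (P.isoExt n _) (P.isoExt (n + 1) _) (P.isoExt (n + 1) _)
    (extδ_comp_isoExt_hom X hS n) (isoExt_hom_naturality_right P (n + 1) S.f)

lemma extδ_naturality {X X' : C} (f : X ⟶ X') :
    ((Ext R C n).map f.op).app S.X₃ ≫ extδ R X hS n =
      extδ R X' hS n ≫ ((Ext R C (n + 1)).map f.op).app S.X₁ := by
  let P := projectiveResolution X
  let P' := projectiveResolution X'
  have hφ := ProjectiveResolution.lift_commutes_zero f P P'
  rw [← cancel_mono (P.isoExt (R := R) (n + 1) S.X₁).hom]
  simp only [extδ, Category.assoc, Iso.inv_hom_id, Category.comp_id,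
    isoExt_hom_naturality_left _ hφ (n + 1), Iso.inv_hom_id_assoc, P, P']
  rw [reassoc_of% isoExt_hom_naturality_left _ hφ, homComplexδ_naturality]

end LongExactSequence

lemma ext_map_add (X : C) (n : ℕ) {Y Y' : C} (g h : Y ⟶ Y') :
    ((Ext R C n).obj (op X)).map (g + h) =
      ((Ext R C n).obj (op X)).map g + ((Ext R C n).obj (op X)).map h := by
  rw [← cancel_mono ((projectiveResolution X).isoExt (R := R) n Y').hom, Preadditive.add_comp]
  simp only [isoExt_hom_naturality_right, homComplexMap_add, HomologicalComplex.homologyMap_add,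
    Preadditive.comp_add]

lemma ext_map_smul (X : C) (n : ℕ) {Y Y' : C} (r : R) (g : Y ⟶ Y') :
    ((Ext R C n).obj (op X)).map (r • g) = r • ((Ext R C n).obj (op X)).map g := by
  rw [← cancel_mono ((projectiveResolution X).isoExt (R := R) n Y').hom, Linear.smul_comp]
  simp only [isoExt_hom_naturality_right, homComplexMap_smul, homologyMap_smul, Linear.comp_smul]

lemma ext_smul_eq_zero {X : C} {r : R} (hr : r • 𝟙 X = 0) (n : ℕ) (Y : C)
    (z : ((Ext R C n).obj (op X)).obj Y) : r • z = 0 := by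
  let P := projectiveResolution X
  have h₁ := isoExt_hom_naturality_left (R := R) (P := P) (P' := P) (f := r • 𝟙 X)
    (r • 𝟙 P.complex) (by
      simp only [HomologicalComplex.smul_f_apply, HomologicalComplex.id_f, Linear.smul_comp,
        Category.id_comp]
      exact ((Linear.comp_smul _ _ _ (P.π.f 0) r (𝟙 X)).trans
        (congrArg (r • ·) (Category.comp_id (P.π.f 0)))).symm) n Y
  have h₂ := isoExt_hom_naturality_left (R := R) (P := P) (P' := P) (f := r • 𝟙 X) 0 (by
    rw [hr, HomologicalComplex.zero_f, zero_comp]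
    exact comp_zero.symm) n Y
  rw [h₁, homComplexPrecomp_smul_id, homComplexPrecomp_zero, homologyMap_smul,
    HomologicalComplex.homologyMap_id, HomologicalComplex.homologyMap_zero, comp_zero,
    Linear.comp_smul, Category.comp_id] at h₂
  refine (ModuleCat.mono_iff_injective (P.isoExt (R := R) n Y).hom).1 inferInstance ?_
  rw [map_smul, map_zero]
  exact ConcreteCategory.congr_hom h₂ z

lemma ext_succ_subsingleton_of_injective (X : C) (n : ℕ) (I : C) [Injective I] :
    Subsingleton (((Ext R C (n + 1)).obj (op X)).obj I) := by
  let P := projectiveResolution X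
  suffices IsZero (((Ext R C (n + 1)).obj (op X)).obj I) from
    ModuleCat.subsingleton_of_isZero this
  refine IsZero.of_iso ?_ (P.isoExt (n + 1) I)
  rw [← HomologicalComplex.exactAt_iff_isZero_homology,
    HomologicalComplex.exactAt_iff' _ n (n + 1) (n + 2) (by simp) (by simp),
    ShortComplex.ShortExact.moduleCat_exact_iff_function_exact]
  refine fun x ↦ ⟨fun hx ↦ ⟨(P.exact_succ n).descToInjective (x : P.complex.X (n + 1) ⟶ I) hx,
    (P.exact_succ n).comp_descToInjective _ _⟩, ?_⟩
  rintro ⟨y, rfl⟩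
  have hy (y : P.complex.X n ⟶ I) :
      P.complex.d (n + 2) (n + 1) ≫ P.complex.d (n + 1) n ≫ y = 0 := by simp
  exact hy y

section ExtZero

instance (Y : C) : PreservesFiniteColimits ((linearYoneda R C).obj Y).rightOp := by
  have : PreservesFiniteLimits ((linearYoneda R C).obj Y ⋙ forget (ModuleCat R)) :=
    inferInstanceAs (PreservesFiniteLimits (yoneda.obj Y))
  have : PreservesFiniteLimits ((linearYoneda R C).obj Y) :=
    preservesFiniteLimits_of_reflects_of_preserves _ (forget (ModuleCat R))
  exact preservesFiniteColimits_rightOp _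

lemma fromLeftDerivedZero_naturality {D : Type*} [Category D] [Abelian D] {F G : C ⥤ D}
    [F.Additive] [G.Additive] (α : F ⟶ G) :
    NatTrans.leftDerived α 0 ≫ G.fromLeftDerivedZero = F.fromLeftDerivedZero ≫ α := by
  ext X
  let P := projectiveResolution X
  have h : HomologicalComplex.opcyclesMap ((NatTrans.mapHomologicalComplex α
      (ComplexShape.down ℕ)).app P.complex) 0 ≫ P.fromLeftDerivedZero' G =
        P.fromLeftDerivedZero' F ≫ α.app X := by
    rw [← cancel_epi (HomologicalComplex.pOpcycles _ _)]
    simp only [HomologicalComplex.p_opcyclesMap_assoc,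
      ProjectiveResolution.pOpcycles_comp_fromLeftDerivedZero',
      ProjectiveResolution.pOpcycles_comp_fromLeftDerivedZero'_assoc]
    exact (α.naturality _).symm
  rw [NatTrans.comp_app, NatTrans.comp_app, P.fromLeftDerivedZero_eq, P.fromLeftDerivedZero_eq,
    ProjectiveResolution.leftDerived_app_eq _ P]
  simp only [Category.assoc]
  erw [Iso.inv_hom_id_assoc]
  exact congrArg (_ ≫ ·) ((HomologicalComplex.homologyι_naturality_assoc _ _ _).trans
    ((congrArg (_ ≫ ·) h).trans (Category.assoc _ _ _).symm))

variable (R) in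
/-- The comparison map `Hom(X, Y) ⟶ Ext⁰(X, Y)`. -/
def homToExtZero (X Y : C) : ModuleCat.of R (X ⟶ Y) ⟶ ((Ext R C 0).obj (op X)).obj Y :=
  (((linearYoneda R C).obj Y).rightOp.fromLeftDerivedZero.app X).unop

lemma homToExtZero_surjective (X Y : C) : Function.Surjective (homToExtZero R X Y) := by
  have : IsIso (((linearYoneda R C).obj Y).rightOp.fromLeftDerivedZero.app X) := inferInstance
  have : IsIso (homToExtZero R X Y) := isIso_unop _
  exact (ModuleCat.epi_iff_surjective _).1 inferInstance

lemma homToExtZero_naturality_left {X X' : C} (f : X ⟶ X') (Y : C) :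
    homToExtZero R X' Y ≫ ((Ext R C 0).map f.op).app Y =
      ModuleCat.ofHom (Linear.leftComp R Y f) ≫ homToExtZero R X Y :=
  congrArg Quiver.Hom.unop (((linearYoneda R C).obj Y).rightOp.fromLeftDerivedZero.naturality f)

lemma homToExtZero_naturality_right (X : C) {Y Y' : C} (g : Y ⟶ Y') :
    homToExtZero R X Y ≫ ((Ext R C 0).obj (op X)).map g =
      ModuleCat.ofHom (Linear.rightComp R X g) ≫ homToExtZero R X Y' :=
  congrArg Quiver.Hom.unop (congr_app (fromLeftDerivedZero_naturality
    (NatTrans.rightOp ((linearYoneda R C).map g))) X)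

end ExtZero

end Ext

section LocalCohomology

open Limits Opposite

universe u

variable {R : Type u} [CommRing R] (J : Ideal R)
variable {M N L : Type u} [AddCommGroup M] [Module R M] [AddCommGroup N] [Module R N]
  [AddCommGroup L] [Module R L]

/-- `Extⁱ(R / J ^ t, M)`: the terms of the direct system whose colimit is `Hⁱ_J(M)`. -/
abbrev ExtPow (i t : ℕ) (M : Type u) [AddCommGroup M] [Module R M] : Type u :=
  ((Ext R (ModuleCat.{u} R) i).obj (op (.of R (R ⧸ J ^ t)))).obj (.of R M)

namespace ExtPow

/-- The map `Extⁱ(R / J ^ t, M) → Extⁱ(R / J ^ t, N)` induced by `f : M → N`. -/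
def map (i t : ℕ) (f : M →ₗ[R] N) : ExtPow J i t M →ₗ[R] ExtPow J i t N :=
  (((Ext R (ModuleCat.{u} R) i).obj (op (.of R (R ⧸ J ^ t)))).map (ModuleCat.ofHom f)).hom

/-- The morphism `R / J ^ t ⟶ R / J ^ s` for `s ≤ t`. -/
def proj {s t : ℕ} (h : s ≤ t) : ModuleCat.of R (R ⧸ J ^ t) ⟶ ModuleCat.of R (R ⧸ J ^ s) :=
  (localCohomology.ringModIdeals (localCohomology.idealPowersDiagram J)).map (homOfLE h).op

variable (M) in
/-- The transition map `Extⁱ(R / J ^ s, M) → Extⁱ(R / J ^ t, M)` for `s ≤ t`. -/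
def transition (i : ℕ) {s t : ℕ} (h : s ≤ t) : ExtPow J i s M →ₗ[R] ExtPow J i t M :=
  (((Ext R (ModuleCat.{u} R) i).map (proj J h).op).app (.of R M)).hom

lemma map_transition (i : ℕ) {s t : ℕ} (h : s ≤ t) (f : M →ₗ[R] N) (y : ExtPow J i s M) :
    map J i t f (transition J M i h y) = transition J N i h (map J i s f y) :=
  (ConcreteCategory.congr_hom
    (((Ext R (ModuleCat.{u} R) i).map (proj J h).op).naturality (ModuleCat.ofHom f)) y).symm

/-- The comparison map `Hom(R / J ^ t, M) → Ext⁰(R / J ^ t, M)`. -/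
def ofHom (t : ℕ) (g : (R ⧸ J ^ t) →ₗ[R] M) : ExtPow J 0 t M :=
  (homToExtZero R (ModuleCat.of R (R ⧸ J ^ t)) (ModuleCat.of R M)).hom (ModuleCat.ofHom g)

lemma ofHom_zero (t : ℕ) : ofHom J t (0 : (R ⧸ J ^ t) →ₗ[R] M) = 0 :=
  map_zero (homToExtZero R (ModuleCat.of R (R ⧸ J ^ t)) (ModuleCat.of R M)).hom

lemma map_ofHom (t : ℕ) (g : (R ⧸ J ^ t) →ₗ[R] M) (f : M →ₗ[R] N) :
    map J 0 t f (ofHom J t g) = ofHom J t (f ∘ₗ g) :=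
  ConcreteCategory.congr_hom
    (homToExtZero_naturality_right (.of R (R ⧸ J ^ t)) (ModuleCat.ofHom f)) _

lemma transition_ofHom {s t : ℕ} (h : s ≤ t) (g : (R ⧸ J ^ s) →ₗ[R] M) :
    transition J M 0 h (ofHom J s g) = ofHom J t (g ∘ₗ (proj J h).hom) :=
  ConcreteCategory.congr_hom (homToExtZero_naturality_left (proj J h) (.of R M)) _

lemma ofHom_surjective (t : ℕ) : Function.Surjective (ofHom (M := M) J t) := fun y ↦ by
  obtain ⟨g, rfl⟩ := homToExtZero_surjective _ _ y
  exact ⟨(show ModuleCat.of R (R ⧸ J ^ t) ⟶ .of R M from g).hom, rfl⟩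

end ExtPow

/-- The local cohomology module `Hⁱ_J(M)` of an unbundled module `M`. -/
abbrev LocalCoh (i : ℕ) (M : Type u) [AddCommGroup M] [Module R M] : Type u :=
  (localCohomology J i).obj (.of R M)

namespace LocalCoh

/-- The direct system of functors `Extⁱ(R / J ^ t, -)` defining local cohomology. -/
abbrev powDiagram (i : ℕ) : ℕᵒᵖᵒᵖ ⥤ ModuleCat.{u} R ⥤ ModuleCat.{u} R :=
  localCohomology.diagram (localCohomology.idealPowersDiagram J) i

instance (i : ℕ) : HasColimit (powDiagram J i) := localCohomology.hasColimitDiagram _ i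

instance : PreservesFilteredColimitsOfSize.{0, 0} (forget (ModuleCat.{u} R)) :=
  preservesSmallestFilteredColimits_of_preservesFilteredColimits _

/-- The map `Hⁱ_J(M) → Hⁱ_J(N)` induced by `f : M → N`. -/
def map (i : ℕ) (f : M →ₗ[R] N) : LocalCoh J i M →ₗ[R] LocalCoh J i N :=
  ((localCohomology J i).map (ModuleCat.ofHom f)).hom

variable (M) in
/-- The structure map `Extⁱ(R / J ^ t, M) → Hⁱ_J(M)` of the colimit. -/
def ι (i t : ℕ) : ExtPow J i t M →ₗ[R] LocalCoh J i M :=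
  ((colimit.ι (powDiagram J i) (op (op t))).app (.of R M)).hom

variable (M) in
/-- The colimit cocone defining local cohomology, evaluated at `M`. -/
def cocone (i : ℕ) :
    Cocone (powDiagram J i ⋙ (evaluation _ _).obj (ModuleCat.of R M)) :=
  ((evaluation _ _).obj (ModuleCat.of R M)).mapCocone (colimit.cocone (powDiagram J i))

variable (M) in
/-- Evaluation at `M` preserves the colimit defining local cohomology. -/
def isColimitCocone (i : ℕ) : IsColimit (cocone J M i) :=
  isColimitOfPreserves ((evaluation _ _).obj (ModuleCat.of R M))
    (colimit.isColimit (powDiagram J i))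

lemma map_ι (i t : ℕ) (f : M →ₗ[R] N) (y : ExtPow J i t M) :
    map J i f (ι J M i t y) = ι J N i t (ExtPow.map J i t f y) :=
  (ConcreteCategory.congr_hom ((colimit.ι (powDiagram J i) (op (op t))).naturality
    (ModuleCat.ofHom f)) y).symm

lemma ι_transition (i : ℕ) {s t : ℕ} (h : s ≤ t) (y : ExtPow J i s M) :
    ι J M i t (ExtPow.transition J M i h y) = ι J M i s y :=
  ConcreteCategory.congr_hom ((cocone J M i).w (homOfLE h).op.op) y

variable {J} in
lemma exists_ι_eq {i : ℕ} (x : LocalCoh J i M) : ∃ t y, ι J M i t y = x := by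
  obtain ⟨t, y, h⟩ := Concrete.isColimit_exists_rep _ (isColimitCocone J M i) x
  exact ⟨t.unop.unop, y, h⟩

variable {J} in
lemma exists_transition_eq_zero {i t : ℕ} {y : ExtPow J i t M} (hy : ι J M i t y = 0) :
    ∃ (t' : ℕ) (h : t ≤ t'), ExtPow.transition J M i h y = 0 := by
  obtain ⟨t', f, g, h⟩ := Concrete.isColimit_exists_of_rep_eq _ (isColimitCocone J M i)
    (i := op (op t)) (j := op (op t)) y (0 : ExtPow J i t M) (hy.trans (map_zero _).symm)
  exact ⟨t'.unop.unop, leOfHom f.unop.unop, h.trans (map_zero _)⟩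

lemma exists_desc (i : ℕ) {D : Type u} [AddCommGroup D] [Module R D]
    (φ : ∀ t, ExtPow J i t M →ₗ[R] D)
    (hφ : ∀ s t (h : s ≤ t) y, φ t (ExtPow.transition J M i h y) = φ s y) :
    ∃ ψ : LocalCoh J i M →ₗ[R] D, ∀ t y, ψ (ι J M i t y) = φ t y := by
  let c : Cocone (powDiagram J i ⋙ (evaluation _ _).obj (ModuleCat.of R M)) :=
    { pt := .of R D
      ι := { app := fun t ↦ ModuleCat.ofHom (φ t.unop.unop)
             naturality := fun s t f ↦ by
              ext y
              exact hφ _ _ (leOfHom f.unop.unop) y } }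
  exact ⟨((isColimitCocone J M i).desc c).hom, fun t y ↦
    ConcreteCategory.congr_hom ((isColimitCocone J M i).fac c (op (op t))) y⟩

variable {J} in
lemma exact_of_forall_exact {i j k : ℕ} {F : LocalCoh J i M →ₗ[R] LocalCoh J j N}
    {G : LocalCoh J j N →ₗ[R] LocalCoh J k L} (φ : ∀ t, ExtPow J i t M →ₗ[R] ExtPow J j t N)
    (ψ : ∀ t, ExtPow J j t N →ₗ[R] ExtPow J k t L)
    (hF : ∀ t y, F (ι J M i t y) = ι J N j t (φ t y))
    (hG : ∀ t y, G (ι J N j t y) = ι J L k t (ψ t y))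
    (hψ : ∀ s t (h : s ≤ t) y, ψ t (ExtPow.transition J N j h y) =
      ExtPow.transition J L k h (ψ s y))
    (h : ∀ t, Function.Exact (φ t) (ψ t)) : Function.Exact F G := by
  refine fun x ↦ ⟨fun hx ↦ ?_, ?_⟩
  · obtain ⟨t, y, rfl⟩ := exists_ι_eq x
    obtain ⟨t', htt', hy⟩ := exists_transition_eq_zero ((hG t y).symm.trans hx)
    obtain ⟨z, hz⟩ := (h t' _).1 ((hψ t t' htt' y).trans hy)
    exact ⟨ι J M i t' z, by rw [hF, hz, ι_transition]⟩
  · rintro ⟨x, rfl⟩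
    obtain ⟨t, y, rfl⟩ := exists_ι_eq x
    rw [hF, hG, (h t).apply_apply_eq_zero, map_zero]

lemma map_comp (i : ℕ) (f : M →ₗ[R] N) (g : N →ₗ[R] L) :
    map J i (g ∘ₗ f) = map J i g ∘ₗ map J i f :=
  congrArg ModuleCat.Hom.hom
    ((localCohomology J i).map_comp (ModuleCat.ofHom f) (ModuleCat.ofHom g))

lemma map_id (i : ℕ) : map J i (LinearMap.id : M →ₗ[R] M) = LinearMap.id :=
  congrArg ModuleCat.Hom.hom ((localCohomology J i).map_id (ModuleCat.of R M))

lemma map_add (i : ℕ) (f g : M →ₗ[R] N) : map J i (f + g) = map J i f + map J i g := by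
  ext x
  obtain ⟨t, y, rfl⟩ := exists_ι_eq x
  simp only [LinearMap.add_apply, map_ι, ← _root_.map_add]
  exact congrArg _ (ConcreteCategory.congr_hom
    (ext_map_add (R := R) _ i (ModuleCat.ofHom f) (ModuleCat.ofHom g)) y)

lemma map_smul (i : ℕ) (r : R) (f : M →ₗ[R] N) : map J i (r • f) = r • map J i f := by
  ext x
  obtain ⟨t, y, rfl⟩ := exists_ι_eq x
  rw [LinearMap.smul_apply, map_ι, map_ι, ← _root_.map_smul]
  exact congrArg _ (ConcreteCategory.congr_hom (ext_map_smul (R := R) _ i r (ModuleCat.ofHom f)) y)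

lemma map_zero (i : ℕ) : map J i (0 : M →ₗ[R] N) = 0 := by
  simpa only [zero_smul] using map_smul J i 0 (0 : M →ₗ[R] N)

variable {J} in
lemma exists_pow_smul_eq_zero {i : ℕ} (x : LocalCoh J i M) : ∃ t, ∀ r ∈ J ^ t, r • x = 0 := by
  obtain ⟨t, y, rfl⟩ := exists_ι_eq x
  refine ⟨t, fun r hr ↦ ?_⟩
  have hr' : r • 𝟙 (ModuleCat.of R (R ⧸ J ^ t)) = 0 := by
    ext
    change Ideal.Quotient.mk (J ^ t) (r * 1) = 0
    rwa [mul_one, Ideal.Quotient.eq_zero_iff_mem]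
  rw [← _root_.map_smul, ext_smul_eq_zero hr', _root_.map_zero]

lemma subsingleton_of_injective (i : ℕ) (I : Type u) [AddCommGroup I] [Module R I]
    [Module.Injective R I] : Subsingleton (LocalCoh J (i + 1) I) := by
  have : Injective (ModuleCat.of R I) := Module.injective_object_of_injective_module R I
  refine subsingleton_of_forall_eq 0 fun x ↦ ?_
  obtain ⟨t, y, rfl⟩ := exists_ι_eq x
  have := ext_succ_subsingleton_of_injective (R := R) (.of R (R ⧸ J ^ t)) i (ModuleCat.of R I)
  rw [Subsingleton.elim y 0, _root_.map_zero]

section Zero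

variable {J}

lemma exists_ι_ofHom_eq (x : LocalCoh J 0 M) :
    ∃ t, ∃ g : (R ⧸ J ^ t) →ₗ[R] M, ι J M 0 t (ExtPow.ofHom J t g) = x := by
  obtain ⟨t, y, rfl⟩ := exists_ι_eq x
  obtain ⟨g, rfl⟩ := ExtPow.ofHom_surjective J t y
  exact ⟨t, g, rfl⟩

lemma zero_subsingleton (h : ∀ x : M, (∃ t, ∀ r ∈ J ^ t, r • x = 0) → x = 0) :
    Subsingleton (LocalCoh J 0 M) := by
  refine subsingleton_of_forall_eq 0 fun x ↦ ?_
  obtain ⟨t, g, rfl⟩ := exists_ι_ofHom_eq x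
  have hg : g = 0 := LinearMap.ext fun q ↦ h _ ⟨t, fun r hr ↦ by
    obtain ⟨a, rfl⟩ := Ideal.Quotient.mk_surjective q
    rw [← _root_.map_smul]
    refine (congrArg g ?_).trans (_root_.map_zero g)
    exact Ideal.Quotient.eq_zero_iff_mem.2 (Ideal.mul_mem_right a _ hr)⟩
  rw [hg, ExtPow.ofHom_zero, _root_.map_zero]

lemma map_zero_surjective {f : M →ₗ[R] N} (hf : Function.Surjective f)
    (h : ∀ x : M, ∃ t, ∀ r ∈ J ^ t, r • x = 0) : Function.Surjective (map J 0 f) := by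
  intro y
  obtain ⟨t, g, rfl⟩ := exists_ι_ofHom_eq y
  obtain ⟨x, hx⟩ := hf (g 1)
  obtain ⟨s, hs⟩ := h x
  let g' : (R ⧸ J ^ (s + t)) →ₗ[R] M := Submodule.liftQ _ (LinearMap.toSpanSingleton R M x)
    fun r hr ↦ hs r (Ideal.pow_le_pow_right (Nat.le_add_right s t) hr)
  have hg' : f ∘ₗ g' = g ∘ₗ (ExtPow.proj J (Nat.le_add_left t s)).hom := by
    refine Submodule.linearMap_qext _ (LinearMap.ext_ring ?_)
    change f ((1 : R) • x) = g 1
    rw [← hx, one_smul]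
  refine ⟨ι J M 0 (s + t) (ExtPow.ofHom J (s + t) g'), ?_⟩
  rw [map_ι, ExtPow.map_ofHom, hg', ← ExtPow.transition_ofHom, ι_transition]

end Zero

section LongExactSequence

variable {J} {f : M →ₗ[R] N} {g : N →ₗ[R] L}

lemma shortExact_mk (h : Function.Exact f g) (hf : Function.Injective f)
    (hg : Function.Surjective g) :
    (ShortComplex.mk (ModuleCat.ofHom f) (ModuleCat.ofHom g)
      (ModuleCat.hom_ext h.linearMap_comp_eq_zero)).ShortExact :=
  .mk' ((ShortComplex.ShortExact.moduleCat_exact_iff_function_exact _).2 h)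
    ((ModuleCat.mono_iff_injective _).2 hf) ((ModuleCat.epi_iff_surjective _).2 hg)

lemma exact_map_map (h : Function.Exact f g) (hf : Function.Injective f)
    (hg : Function.Surjective g) (i : ℕ) : Function.Exact (map J i f) (map J i g) :=
  exact_of_forall_exact (fun t ↦ ExtPow.map J i t f) (fun t ↦ ExtPow.map J i t g)
    (fun _ ↦ map_ι J i _ f) (fun _ ↦ map_ι J i _ g) (fun _ _ h y ↦ ExtPow.map_transition J i h g y)
    (fun _ ↦ ext_exact₂ _ (shortExact_mk h hf hg) i)

lemma exists_connecting (h : Function.Exact f g) (hf : Function.Injective f)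
    (hg : Function.Surjective g) (i : ℕ) :
    ∃ δ : LocalCoh J i L →ₗ[R] LocalCoh J (i + 1) M,
      Function.Exact (map J i g) δ ∧ Function.Exact δ (map J (i + 1) f) := by
  have hS := shortExact_mk h hf hg
  let δ' (t : ℕ) : ExtPow J i t L →ₗ[R] ExtPow J (i + 1) t M :=
    (extδ R (.of R (R ⧸ J ^ t)) hS i).hom
  have hδ' (s t : ℕ) (hst : s ≤ t) (y : ExtPow J i s L) :
      δ' t (ExtPow.transition J L i hst y) = ExtPow.transition J M (i + 1) hst (δ' s y) :=
    ConcreteCategory.congr_hom (extδ_naturality hS i (ExtPow.proj J hst)) y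
  obtain ⟨δ, hδ⟩ := exists_desc J i (fun t ↦ ι J M (i + 1) t ∘ₗ δ' t) fun s t hst y ↦ by
    simp only [LinearMap.comp_apply, hδ', ι_transition]
  exact ⟨δ,
    exact_of_forall_exact _ δ' (fun _ ↦ map_ι J i _ g) hδ hδ' fun _ ↦ ext_exact₃ _ hS i,
    exact_of_forall_exact δ' _ hδ (fun _ ↦ map_ι J (i + 1) _ f)
      (fun _ _ hst y ↦ ExtPow.map_transition J (i + 1) hst f y) fun _ ↦ ext_exact₁ _ hS i⟩

end LongExactSequence

end LocalCoh

end LocalCohomology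

section PowTorsion

universe u

variable {R : Type u} [CommRing R] (J : Ideal R)

section Saturation

variable {M N : Type u} [AddCommGroup M] [Module R M] [AddCommGroup N] [Module R N]

/-- The saturation of a submodule `W` with respect to `J`: the elements carried into `W` by some
power of `J`. The `J`-power torsion submodule is `powSaturation J ⊥`. -/
def powSaturation (W : Submodule R M) : Submodule R M where
  carrier := {x | ∃ t : ℕ, ∀ r ∈ J ^ t, r • x ∈ W}
  zero_mem' := ⟨0, fun r _ ↦ by simp only [smul_zero, zero_mem]⟩
  add_mem' := by
    rintro x y ⟨s, hs⟩ ⟨t, ht⟩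
    refine ⟨s + t, fun r hr ↦ ?_⟩
    rw [smul_add]
    exact add_mem (hs r (Ideal.pow_le_pow_right (Nat.le_add_right s t) hr))
      (ht r (Ideal.pow_le_pow_right (Nat.le_add_left t s) hr))
  smul_mem' := by
    rintro c x ⟨t, ht⟩
    exact ⟨t, fun r hr ↦ by rw [smul_comm]; exact W.smul_mem c (ht r hr)⟩

variable {J} in
lemma mem_powSaturation {W : Submodule R M} {x : M} :
    x ∈ powSaturation J W ↔ ∃ t : ℕ, ∀ r ∈ J ^ t, r • x ∈ W := Iff.rfl

lemma powSaturation_comap (f : M →ₗ[R] N) (W : Submodule R N) :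
    powSaturation J (W.comap f) = (powSaturation J W).comap f := by
  ext x
  simp only [mem_powSaturation, Submodule.mem_comap, map_smul]

lemma le_powSaturation (W : Submodule R M) : W ≤ powSaturation J W :=
  fun _ hx ↦ ⟨0, fun r _ ↦ W.smul_mem r hx⟩

lemma powSaturation_mono {W W' : Submodule R M} (h : W ≤ W') :
    powSaturation J W ≤ powSaturation J W' := by
  rintro x ⟨t, ht⟩
  exact ⟨t, fun r hr ↦ h (ht r hr)⟩

lemma map_powSaturation_le (f : M →ₗ[R] N) (W : Submodule R M) :
    (powSaturation J W).map f ≤ powSaturation J (W.map f) := by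
  rw [Submodule.map_le_iff_le_comap, ← powSaturation_comap]
  exact powSaturation_mono J (Submodule.le_comap_map f W)

variable {J} in
lemma powSaturation_bot_submodule {W : Submodule R M} (hW : W ≤ powSaturation J ⊥) :
    powSaturation J (⊥ : Submodule R W) = ⊤ := by
  refine eq_top_iff.2 fun x _ ↦ ?_
  obtain ⟨t, ht⟩ := hW x.2
  exact ⟨t, fun r hr ↦ Subtype.ext (ht r hr)⟩

variable {J} in
lemma exists_pow_smul_le {V W : Submodule R M} (hV : V.FG) (h : V ≤ powSaturation J W) :
    ∃ t : ℕ, J ^ t • V ≤ W := by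
  induction V, hV using Submodule.fg_induction with
  | singleton x =>
    obtain ⟨t, ht⟩ := h (Submodule.mem_span_singleton_self x)
    refine ⟨t, Submodule.smul_le.2 fun r hr y hy ↦ ?_⟩
    obtain ⟨c, rfl⟩ := Submodule.mem_span_singleton.1 hy
    rw [smul_comm]
    exact W.smul_mem c (ht r hr)
  | sup V₁ V₂ _ _ ih₁ ih₂ =>
    obtain ⟨s, hs⟩ := ih₁ (le_sup_left.trans h)
    obtain ⟨t, ht⟩ := ih₂ (le_sup_right.trans h)
    refine ⟨s + t, ?_⟩
    rw [Submodule.smul_sup]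
    exact sup_le
      ((Submodule.smul_mono_left (Ideal.pow_le_pow_right (Nat.le_add_right s t))).trans hs)
      ((Submodule.smul_mono_left (Ideal.pow_le_pow_right (Nat.le_add_left t s))).trans ht)

end Saturation

section Injective

lemma exists_pow_inf_le_pow_smul [IsNoetherianRing R] (a : Ideal R) (c : ℕ) :
    ∃ k : ℕ, J ^ k ⊓ a ≤ J ^ c • a := by
  obtain ⟨k, hk⟩ := Ideal.exists_pow_inf_eq_pow_smul J (M := R) a
  refine ⟨k + c, ?_⟩
  have := hk (k + c) (Nat.le_add_right k c)
  rw [Nat.add_sub_cancel_left, smul_eq_mul, Ideal.mul_top] at this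
  exact this.trans_le (Submodule.smul_mono le_rfl inf_le_right)

lemma exists_pow_inf_le_map_ker [IsNoetherianRing R] (a : Ideal R) {N : Type u} [AddCommGroup N]
    [Module R N] (hN : powSaturation J (⊥ : Submodule R N) = ⊤) (g : a →ₗ[R] N) :
    ∃ k : ℕ, J ^ k ⊓ a ≤ (LinearMap.ker g).map a.subtype := by
  have hg : ⊤ ≤ powSaturation J (LinearMap.ker g) := by
    rw [LinearMap.ker, powSaturation_comap, hN, Submodule.comap_top]
  obtain ⟨c, hc⟩ := exists_pow_smul_le Module.Finite.fg_top hg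
  obtain ⟨k, hk⟩ := exists_pow_inf_le_pow_smul J a c
  refine ⟨k, hk.trans ?_⟩
  calc J ^ c • a = (J ^ c • (⊤ : Submodule R a)).map a.subtype := by
        rw [Submodule.map_smul'', Submodule.map_top, Submodule.range_subtype]
    _ ≤ (LinearMap.ker g).map a.subtype := Submodule.map_mono hc

variable (I : Type u) [AddCommGroup I] [Module R I]

-- By Artin–Rees a map from an ideal `a` to a torsion module factors through `a / (J ^ k ⊓ a)`,
-- so it extends to `R / J ^ k` with values in `I`, hence in the torsion of `I`.
lemma injective_powTorsion [IsNoetherianRing R] [Module.Injective R I] :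
    Module.Injective R (powSaturation J (⊥ : Submodule R I)) := by
  refine Module.Baer.injective fun a g ↦ ?_
  obtain ⟨k, hk⟩ := exists_pow_inf_le_map_ker J a (powSaturation_bot_submodule le_rfl) g
  let q : a →ₗ[R] R ⧸ J ^ k := (J ^ k).mkQ ∘ₗ a.subtype
  have hq : LinearMap.ker q ≤ LinearMap.ker g := fun x hx ↦ by
    obtain ⟨y, hy, hyx⟩ := hk ⟨(Submodule.Quotient.mk_eq_zero _).1 hx, x.2⟩
    rwa [← Subtype.ext hyx]
  obtain ⟨h, hh⟩ := Module.Injective.out ((LinearMap.ker q).liftQ q le_rfl)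
    (LinearMap.ker_eq_bot.1 (Submodule.ker_liftQ_eq_bot _ _ _ le_rfl))
    ((powSaturation J ⊥).subtype ∘ₗ (LinearMap.ker q).liftQ g hq)
  have h_torsion (r : R) : h ((J ^ k).mkQ r) ∈ powSaturation J (⊥ : Submodule R I) := by
    refine ⟨k, fun s hs ↦ ?_⟩
    rw [← map_smul, ← map_smul, smul_eq_mul, Submodule.mkQ_apply,
      (Submodule.Quotient.mk_eq_zero _).2 (Ideal.mul_mem_right r _ hs), map_zero]
    exact zero_mem _
  refine ⟨LinearMap.codRestrict _ (h ∘ₗ (J ^ k).mkQ) h_torsion, fun x hx ↦ Subtype.ext ?_⟩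
  exact hh (Submodule.Quotient.mk ⟨x, hx⟩)

lemma exists_injective_embedding (N : Type u) [AddCommGroup N] [Module R N] :
    ∃ (I : Type u) (_ : AddCommGroup I) (_ : Module R I) (f : N →ₗ[R] I),
      Module.Injective R I ∧ Function.Injective f := by
  let I := Injective.under (ModuleCat.of R N)
  have : Injective (ModuleCat.of R I) := inferInstanceAs (Injective I)
  exact ⟨I, inferInstance, inferInstance, (Injective.ι (ModuleCat.of R N)).hom,
    Module.injective_module_of_injective_object R I,
    (ModuleCat.mono_iff_injective _).1 inferInstance⟩

lemma exists_torsion_injective_embedding [IsNoetherianRing R] {N : Type u} [AddCommGroup N]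
    [Module R N] (hN : powSaturation J (⊥ : Submodule R N) = ⊤) :
    ∃ (I : Type u) (_ : AddCommGroup I) (_ : Module R I) (f : N →ₗ[R] I),
      Module.Injective R I ∧ powSaturation J (⊥ : Submodule R I) = ⊤ ∧ Function.Injective f := by
  obtain ⟨I, _, _, f, _, hf⟩ := exists_injective_embedding (R := R) N
  have hf_mem (x : N) : f x ∈ powSaturation J (⊥ : Submodule R I) := by
    have := map_powSaturation_le J f ⊥ ⟨x, hN.ge trivial, rfl⟩
    rwa [Submodule.map_bot] at this
  exact ⟨_, inferInstance, inferInstance, f.codRestrict _ hf_mem, injective_powTorsion J I,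
    powSaturation_bot_submodule le_rfl, fun x y h ↦ hf (congrArg Subtype.val h)⟩

end Injective

lemma powSaturation_bot_of_surjective {M N : Type u} [AddCommGroup M] [Module R M]
    [AddCommGroup N] [Module R N] {f : M →ₗ[R] N} (hf : Function.Surjective f)
    (hM : powSaturation J (⊥ : Submodule R M) = ⊤) : powSaturation J (⊥ : Submodule R N) = ⊤ := by
  have := map_powSaturation_le J f ⊥
  rwa [hM, Submodule.map_top, LinearMap.range_eq_top.2 hf, Submodule.map_bot, top_le_iff] at this

lemma subsingleton_of_exact {M N L : Type u} [AddCommGroup M] [Module R M] [AddCommGroup N]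
    [Module R N] [AddCommGroup L] [Module R L] {f : M →ₗ[R] N} {g : N →ₗ[R] L}
    (h : Function.Exact f g) (hf : f = 0) [Subsingleton L] : Subsingleton N := by
  refine subsingleton_of_forall_eq 0 fun y ↦ ?_
  obtain ⟨x, rfl⟩ := (h y).1 (Subsingleton.elim _ _)
  rw [hf, LinearMap.zero_apply]

-- Dimension shifting along `0 → N → I → I / N → 0`, with `I` injective and torsion.
theorem subsingleton_localCoh_of_torsion [IsNoetherianRing R] (i : ℕ) (N : Type u)
    [AddCommGroup N] [Module R N] (hN : powSaturation J (⊥ : Submodule R N) = ⊤) :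
    Subsingleton (LocalCoh J (i + 1) N) := by
  obtain ⟨I, _, _, f, _, hI, hf⟩ := exists_torsion_injective_embedding J hN
  have hq : Function.Surjective (LinearMap.range f).mkQ := Submodule.mkQ_surjective _
  have hQ := powSaturation_bot_of_surjective J hq hI
  obtain ⟨δ, hδ, hδ'⟩ :=
    LocalCoh.exists_connecting (J := J) (LinearMap.exact_map_mkQ_range f) hf hq i
  have h_surj : Function.Surjective (LocalCoh.map J i (LinearMap.range f).mkQ) := by
    match i with
    | 0 => exact LocalCoh.map_zero_surjective hq fun y ↦ hI.ge (x := y) trivial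
    | i + 1 =>
      have := subsingleton_localCoh_of_torsion i _ hQ
      exact Function.surjective_to_subsingleton _
  have := LocalCoh.subsingleton_of_injective J i I
  exact subsingleton_of_exact hδ' (LinearMap.ext fun y ↦ (hδ y).2 (h_surj y))

end PowTorsion

section ModTorsion

universe u

variable {R : Type u} [CommRing R] {J : Ideal R}
variable {M N L : Type u} [AddCommGroup M] [Module R M] [AddCommGroup N] [Module R N]
  [AddCommGroup L] [Module R L]

lemma powSaturation_bot_quotient {W : Submodule R M} (hW : powSaturation J W = ⊤) :
    powSaturation J (⊥ : Submodule R (M ⧸ W)) = ⊤ := by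
  refine eq_top_iff.2 fun x _ ↦ ?_
  obtain ⟨x, rfl⟩ := W.mkQ_surjective x
  obtain ⟨t, ht⟩ := hW.ge (x := x) trivial
  exact ⟨t, fun r hr ↦ (Submodule.Quotient.mk_eq_zero _).2 (ht r hr)⟩

namespace LocalCoh

section Bijective

lemma injective_of_exact {f : M →ₗ[R] N} {g : N →ₗ[R] L} (h : Function.Exact f g)
    [Subsingleton M] : Function.Injective g := by
  rw [Subsingleton.elim f 0] at h
  exact (LinearMap.exact_zero_iff_injective M g).1 h

lemma surjective_of_exact {f : M →ₗ[R] N} {g : N →ₗ[R] L} (h : Function.Exact f g)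
    [Subsingleton L] : Function.Surjective f :=
  fun y ↦ (h y).1 (Subsingleton.elim _ _)

variable [IsNoetherianRing R] {f : M →ₗ[R] N}

lemma map_bijective_of_surjective (hf : Function.Surjective f)
    (hker : LinearMap.ker f ≤ powSaturation J ⊥) (i : ℕ) :
    Function.Bijective (map J (i + 1) f) := by
  have h0 (j : ℕ) : Subsingleton (LocalCoh J (j + 1) (LinearMap.ker f)) :=
    subsingleton_localCoh_of_torsion J j _ (powSaturation_bot_submodule hker)
  have h_exact := LinearMap.exact_subtype_ker_map f
  obtain ⟨δ, hδ, -⟩ := exists_connecting (J := J) h_exact Subtype.val_injective hf (i + 1)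
  exact ⟨injective_of_exact (exact_map_map h_exact Subtype.val_injective hf (i + 1)),
    surjective_of_exact hδ⟩

lemma map_subtype_bijective {W : Submodule R M} (hW : powSaturation J W = ⊤) (i : ℕ) :
    Function.Bijective (map J (i + 2) W.subtype) := by
  have h0 (j : ℕ) : Subsingleton (LocalCoh J (j + 1) (M ⧸ W)) :=
    subsingleton_localCoh_of_torsion J j _ (powSaturation_bot_quotient hW)
  have h_exact := LinearMap.exact_subtype_mkQ W
  obtain ⟨δ, -, hδ⟩ :=
    exists_connecting (J := J) h_exact W.injective_subtype W.mkQ_surjective (i + 1)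
  exact ⟨injective_of_exact hδ,
    surjective_of_exact (exact_map_map h_exact W.injective_subtype W.mkQ_surjective (i + 2))⟩

lemma map_bijective (hker : LinearMap.ker f ≤ powSaturation J ⊥)
    (hrange : powSaturation J (LinearMap.range f) = ⊤) (i : ℕ) :
    Function.Bijective (map J (i + 2) f) := by
  rw [← f.subtype_comp_codRestrict (LinearMap.range f) (LinearMap.mem_range_self f), map_comp]
  refine (map_subtype_bijective hrange i).comp
    (map_bijective_of_surjective f.surjective_rangeRestrict ?_ (i + 1))
  exact (LinearMap.ker_rangeRestrict f).trans_le hker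

end Bijective

end LocalCoh

variable (J) in
/-- The sequence `0 → M → N → L → 0` is a complex whose homology is `J`-power torsion. Over a graded
polynomial ring with `J` the irrelevant ideal, this says that the associated sequence of sheaves is
exact. -/
structure ShortExactModTorsion (f : M →ₗ[R] N) (g : N →ₗ[R] L) : Prop where
  comp_eq_zero : g ∘ₗ f = 0
  ker_left_le : LinearMap.ker f ≤ powSaturation J ⊥
  ker_right_le : LinearMap.ker g ≤ powSaturation J (LinearMap.range f)
  range_right : powSaturation J (LinearMap.range g) = ⊤

namespace ShortExactModTorsion

variable [IsNoetherianRing R] {f : M →ₗ[R] N} {g : N →ₗ[R] L}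

lemma exists_factorization (h : ShortExactModTorsion J f g) :
    ∃ f' : M →ₗ[R] LinearMap.ker g, (LinearMap.ker g).subtype ∘ₗ f' = f ∧
      ∀ i, Function.Bijective (LocalCoh.map J (i + 2) f') := by
  let f' : M →ₗ[R] LinearMap.ker g :=
    f.codRestrict _ fun x ↦ LinearMap.congr_fun h.comp_eq_zero x
  refine ⟨f', f.subtype_comp_codRestrict _ _, fun i ↦ LocalCoh.map_bijective ?_ ?_ i⟩
  · exact (LinearMap.ker_codRestrict _ _ _).trans_le h.ker_left_le
  · have h_range : LinearMap.range f' = (LinearMap.range f).comap (LinearMap.ker g).subtype :=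
      LinearMap.range_codRestrict _ _ _
    rw [h_range, powSaturation_comap, eq_top_iff]
    exact fun x _ ↦ h.ker_right_le x.2

theorem exists_long_exact (h : ShortExactModTorsion J f g) (i : ℕ) :
    Function.Exact (LocalCoh.map J (i + 2) f) (LocalCoh.map J (i + 2) g) ∧
      ∃ δ : LocalCoh J (i + 2) L →ₗ[R] LocalCoh J (i + 3) M,
        Function.Exact (LocalCoh.map J (i + 2) g) δ ∧
        Function.Exact δ (LocalCoh.map J (i + 3) f) := by
  let K := LinearMap.ker g
  let I := LinearMap.range g
  obtain ⟨f', hf', hf'_bij⟩ := h.exists_factorization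
  have hI_bij := LocalCoh.map_subtype_bijective h.range_right i
  have h_exact : Function.Exact K.subtype g.rangeRestrict := LinearMap.exact_iff.2 <| by
    rw [LinearMap.ker_rangeRestrict, Submodule.range_subtype]
  have h_inj : Function.Injective K.subtype := K.injective_subtype
  have h_surj : Function.Surjective g.rangeRestrict := g.surjective_rangeRestrict
  have hf (j : ℕ) : LocalCoh.map J j f = LocalCoh.map J j K.subtype ∘ₗ LocalCoh.map J j f' := by
    rw [← LocalCoh.map_comp, hf']
  have hg : LocalCoh.map J (i + 2) g =
      LocalCoh.map J (i + 2) I.subtype ∘ₗ LocalCoh.map J (i + 2) g.rangeRestrict := by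
    rw [← LocalCoh.map_comp, LinearMap.subtype_comp_codRestrict]
  obtain ⟨δ, hδ, hδ'⟩ := LocalCoh.exists_connecting (J := J) h_exact h_inj h_surj (i + 2)
  let eK := LinearEquiv.ofBijective _ (hf'_bij (i + 1))
  let eI := LinearEquiv.ofBijective _ hI_bij
  refine ⟨?_, eK.symm.toLinearMap ∘ₗ δ ∘ₗ eI.symm.toLinearMap, ?_, ?_⟩
  · rw [hf, hg, hI_bij.1.comp_exact_iff_exact, (hf'_bij i).2.comp_exact_iff_exact]
    exact LocalCoh.exact_map_map h_exact h_inj h_surj (i + 2)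
  · rw [hg, eK.symm.injective.comp_exact_iff_exact]
    exact (eI.conj_exact_iff_exact _ _).2 hδ
  · rw [hf, ← LinearMap.comp_assoc, eI.symm.surjective.comp_exact_iff_exact]
    exact (eK.symm.conj_exact_iff_exact _ _).2 hδ'

end ShortExactModTorsion

section FiniteFree

namespace LocalCoh

variable (J)

/-- The isomorphism `Hⁱ_J(M) ≃ Hⁱ_J(N)` induced by `e : M ≃ N`. -/
def mapEquiv (i : ℕ) (e : M ≃ₗ[R] N) : LocalCoh J i M ≃ₗ[R] LocalCoh J i N :=
  LinearEquiv.ofLinearMap (map J i e.toLinearMap) (map J i e.symm.toLinearMap)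
    (by rw [← map_comp, LinearEquiv.comp_symm, map_id])
    (by rw [← map_comp, LinearEquiv.symm_comp, map_id])

lemma subsingleton_of_retract (i : ℕ) {s : M →ₗ[R] N} {p : N →ₗ[R] M}
    (h : p ∘ₗ s = LinearMap.id) [Subsingleton (LocalCoh J i N)] :
    Subsingleton (LocalCoh J i M) := by
  have h_inv : Function.LeftInverse (map J i p) (map J i s) := fun x ↦ by
    rw [← LinearMap.comp_apply, ← map_comp, h, map_id, LinearMap.id_apply]
  exact h_inv.injective.subsingleton

lemma map_sum {κ : Type*} (s : Finset κ) (i : ℕ) (f : κ → (M →ₗ[R] N)) :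
    map J i (∑ k ∈ s, f k) = ∑ k ∈ s, map J i (f k) :=
  _root_.map_sum (AddMonoidHom.mk' (map J i (M := M) (N := N)) (map_add J i)) f s

/-- The isomorphism `Hⁱ_J(M ^ κ) ≃ Hⁱ_J(M) ^ κ` for finite `κ`. -/
def piEquiv (i : ℕ) (κ : Type) [Fintype κ] [DecidableEq κ] (M : Type u) [AddCommGroup M]
    [Module R M] : LocalCoh J i (κ → M) ≃ₗ[R] (κ → LocalCoh J i M) :=
  LinearEquiv.ofLinearMap
    (LinearMap.pi fun k ↦ map J i (LinearMap.proj k))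
    (LinearMap.lsum R _ R fun k ↦ map J i (LinearMap.single R (fun _ ↦ M) k))
    (by
      refine LinearMap.pi_ext fun k x ↦ funext fun l ↦ ?_
      rw [LinearMap.comp_apply, LinearMap.lsum_piSingle, LinearMap.pi_apply,
        ← LinearMap.comp_apply, ← map_comp, LinearMap.id_apply]
      obtain rfl | hlk := eq_or_ne l k
      · rw [LinearMap.proj_comp_single_same, map_id, LinearMap.id_apply, Pi.single_eq_same]
      · rw [LinearMap.proj_comp_single_ne R _ l k hlk, map_zero, LinearMap.zero_apply,
          Pi.single_eq_of_ne hlk])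
    (by
      have h_sum : ∑ k, LinearMap.single R (fun _ : κ ↦ M) k ∘ₗ LinearMap.proj k = LinearMap.id :=
        LinearMap.lsum_single R _ R
      ext x
      rw [← map_id J i, ← h_sum, map_sum, LinearMap.lsum_apply]
      simp only [LinearMap.comp_apply, LinearMap.sum_apply, LinearMap.proj_apply,
        LinearMap.pi_apply, map_comp])

instance subsingleton_of_projective (i : ℕ) [Subsingleton (LocalCoh J i R)] [Module.Finite R M]
    [Module.Projective R M] : Subsingleton (LocalCoh J i M) := by
  obtain ⟨k, p, s, -, -, hps⟩ := Module.Finite.exists_comp_eq_id_of_projective R M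
  have := (piEquiv J i (Fin k) R).toEquiv.subsingleton
  exact subsingleton_of_retract J i hps

/-- The isomorphism `Hⁱ_J(A ⊗ M) ≃ A ⊗ Hⁱ_J(M)` for a finite free module `A`. -/
def tensorEquiv (i : ℕ) (A M : Type u) [AddCommGroup A] [Module R A] [Module.Free R A]
    [Module.Finite R A] [AddCommGroup M] [Module R M] :
    LocalCoh J i (A ⊗[R] M) ≃ₗ[R] A ⊗[R] LocalCoh J i M :=
  let b := (Module.Free.chooseBasis R A).reindex (Fintype.equivFin _)
  let e (N : Type u) [AddCommGroup N] [Module R N] : A ⊗[R] N ≃ₗ[R] (Fin _ → N) :=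
    TensorProduct.equivFinsuppOfBasisLeft b ≪≫ₗ Finsupp.linearEquivFunOnFinite R N _
  mapEquiv J i (e M) ≪≫ₗ piEquiv J i _ M ≪≫ₗ (e (LocalCoh J i M)).symm

end LocalCoh

end FiniteFree

end ModTorsion

section Depth

open RingTheory.Sequence Pointwise

universe u

lemma eq_zero_of_mem_powTorsion {R : Type u} [CommRing R] {J : Ideal R} {M : Type u}
    [AddCommGroup M] [Module R M] {r : R} (hr : r ∈ J) (h_reg : IsSMulRegular M r) {x : M}
    (hx : ∃ t, ∀ s ∈ J ^ t, s • x = 0) : x = 0 := by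
  obtain ⟨t, ht⟩ := hx
  exact (h_reg.pow t).right_eq_zero_of_smul (ht _ (Ideal.pow_mem_pow hr t))

theorem LocalCoh.subsingleton_of_isWeaklyRegular {R : Type u} [CommRing R] {J : Ideal R}
    {M : Type u} [AddCommGroup M] [Module R M] {rs : List R} (hJ : ∀ r ∈ rs, r ∈ J)
    (hM : IsWeaklyRegular M rs) {i : ℕ} (hi : i < rs.length) : Subsingleton (LocalCoh J i M) := by
  induction hM using IsWeaklyRegular.recIterModByRegular generalizing i with
  | nil => exact absurd hi (Nat.not_lt_zero i)
  | @cons M _ _ r rs h_reg _ ih =>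
    have hr : r ∈ J := hJ r List.mem_cons_self
    match i with
    | 0 => exact zero_subsingleton fun x ↦ eq_zero_of_mem_powTorsion hr h_reg
    | i + 1 =>
      have h_exact : Function.Exact (LinearMap.lsmul R M r) (r • (⊤ : Submodule R M)).mkQ := by
        refine LinearMap.exact_iff.2 ?_
        rw [Submodule.ker_mkQ, LinearMap.range_eq_map]
        rfl
      obtain ⟨δ, -, hδ⟩ := exists_connecting (J := J) h_exact h_reg (Submodule.mkQ_surjective _) i
      have := ih (fun s hs ↦ hJ s (List.mem_cons_of_mem r hs)) (Nat.lt_of_succ_lt_succ hi)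
      have h_inj := injective_of_exact hδ
      have h_smul (x : LocalCoh J (i + 1) M) : map J (i + 1) (LinearMap.lsmul R M r) x = r • x := by
        rw [show LinearMap.lsmul R M r = r • LinearMap.id from rfl, map_smul, map_id]
        rfl
      have h_reg' : IsSMulRegular (LocalCoh J (i + 1) M) r := fun x y hxy ↦ h_inj <| by
        rw [h_smul, h_smul]
        exact hxy
      exact subsingleton_of_forall_eq 0 fun x ↦
        eq_zero_of_mem_powTorsion hr h_reg' (exists_pow_smul_eq_zero x)

lemma X_mul_mem_span_X_image {σ K : Type*} [CommSemiring K] {s : Set σ} {k : σ} (hk : k ∉ s)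
    {p : MvPolynomial σ K} (hp : MvPolynomial.X k * p ∈ Ideal.span (MvPolynomial.X '' s)) :
    p ∈ Ideal.span (MvPolynomial.X '' s) := by
  rw [MvPolynomial.mem_ideal_span_X_image] at hp ⊢
  intro m hm
  obtain ⟨i, hi, h⟩ := hp (Finsupp.single k 1 + m) <| by
    rw [MvPolynomial.mem_support_iff] at hm ⊢
    rwa [MvPolynomial.coeff_X_mul]
  have hki : k ≠ i := fun h ↦ hk (h ▸ hi)
  rw [Finsupp.add_apply, Finsupp.single_eq_of_ne' hki, zero_add] at h
  exact ⟨i, hi, h⟩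

lemma isWeaklyRegular_map_X {σ K : Type*} [CommRing K] {l : List σ} (hl : l.Nodup) :
    IsWeaklyRegular (MvPolynomial σ K) (l.map (MvPolynomial.X (R := K))) := by
  refine (isWeaklyRegular_iff _ _).2 fun i hi ↦ ?_
  rw [List.length_map] at hi
  have hk : l[i] ∉ {k | k ∈ l.take i} := by
    intro h
    obtain ⟨j, hj, hji⟩ := List.mem_take_iff_getElem.1 h
    have := (hl.getElem_inj_iff).1 hji
    lia
  have h_ideal : Ideal.ofList ((l.map (MvPolynomial.X (R := K))).take i) • ⊤ =
      Ideal.span (MvPolynomial.X (R := K) '' {k | k ∈ l.take i}) := by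
    rw [smul_eq_mul, Ideal.mul_top, Ideal.ofList, ← List.map_take]
    congr 1
    ext
    exact List.mem_map
  rw [h_ideal, List.getElem_map]
  exact (isSMulRegular_quotient_iff_mem_of_smul_mem _ _).2 fun p hp ↦ X_mul_mem_span_X_image hk hp

end Depth

section LocalSplitting

universe u

variable {R : Type u} [CommRing R] {J : Ideal R}
variable {M N L F : Type u} [AddCommGroup M] [Module R M] [AddCommGroup N] [Module R N]
  [AddCommGroup L] [Module R L] [AddCommGroup F] [Module R F]

lemma mem_powSaturation_of_forall_prime [IsNoetherianRing R] {W : Submodule R M} {x : M}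
    (h : ∀ p : Ideal R, p.IsPrime → ¬J ≤ p → ∃ s ∉ p, s • x ∈ W) : x ∈ powSaturation J W := by
  let I : Ideal R := W.comap (LinearMap.toSpanSingleton R M x)
  have h_rad : J ≤ I.radical := by
    rw [Ideal.radical_eq_sInf]
    refine le_sInf fun p ⟨hIp, hp⟩ r hr ↦ ?_
    by_contra hrp
    obtain ⟨s, hsp, hs⟩ := h p hp fun hJp ↦ hrp (hJp hr)
    exact hsp (hIp hs)
  obtain ⟨t, ht⟩ :=
    Ideal.exists_pow_le_of_le_radical_of_fg_radical h_rad (IsNoetherian.noetherian _)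
  exact ⟨t, fun r hr ↦ ht hr⟩

variable (J M N) in
/-- `M` and `N` are locally isomorphic on the complement of `V(J)`. Instead of localizing, this asks
near every prime `p` outside `V(J)` for maps in both directions which are mutually inverse up to
multiplication by some `s ∉ p`. -/
def LocallyIso : Prop :=
  ∀ p : Ideal R, p.IsPrime → ¬J ≤ p → ∃ s ∉ p, ∃ (a : M →ₗ[R] N) (b : N →ₗ[R] M),
    a ∘ₗ b = s • LinearMap.id ∧ b ∘ₗ a = s • LinearMap.id

variable (J M) in
lemma LocallyIso.refl : LocallyIso J M M := fun p hp _ ↦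
  ⟨1, p.ne_top_iff_one.1 hp.ne_top, LinearMap.id, LinearMap.id, (one_smul _ _).symm,
    (one_smul _ _).symm⟩

lemma exists_quasi_inverse_of_isLocalizedModule (S : Submonoid R) {M' N' : Type u}
    [AddCommGroup M'] [Module R M'] [AddCommGroup N'] [Module R N'] (l : M →ₗ[R] M')
    (m : N →ₗ[R] N') [IsLocalizedModule S l] [IsLocalizedModule S m]
    [Module.FinitePresentation R M] [Module.FinitePresentation R N] (e : M' ≃ₗ[R] N') :
    ∃ s ∈ S, ∃ (a : M →ₗ[R] N) (b : N →ₗ[R] M),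
      a ∘ₗ b = s • LinearMap.id ∧ b ∘ₗ a = s • LinearMap.id := by
  obtain ⟨a, s, ha⟩ :=
    Module.FinitePresentation.exists_lift_of_isLocalizedModule S m (e.toLinearMap ∘ₗ l)
  obtain ⟨b, t, hb⟩ :=
    Module.FinitePresentation.exists_lift_of_isLocalizedModule S l (e.symm.toLinearMap ∘ₗ m)
  replace ha (x : M) : m (a x) = (s : R) • e (l x) := LinearMap.congr_fun ha x
  replace hb (y : N) : l (b y) = (t : R) • e.symm (m y) := LinearMap.congr_fun hb y
  obtain ⟨v, hv⟩ := Module.Finite.exists_smul_of_comp_eq_of_isLocalizedModule S m (a ∘ₗ b)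
    ((s * t : R) • LinearMap.id) <| LinearMap.ext fun y ↦ by
      simp only [LinearMap.comp_apply, LinearMap.smul_apply, LinearMap.id_apply, ha, hb, map_smul,
        LinearEquiv.apply_symm_apply, mul_smul]
  obtain ⟨w, hw⟩ := Module.Finite.exists_smul_of_comp_eq_of_isLocalizedModule S l (b ∘ₗ a)
    ((s * t : R) • LinearMap.id) <| LinearMap.ext fun x ↦ by
      simp only [LinearMap.comp_apply, LinearMap.smul_apply, LinearMap.id_apply, ha, hb, map_smul,
        LinearEquiv.symm_apply_apply, mul_smul, smul_comm (s : R) (t : R)]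
  replace hv : (v : R) • a ∘ₗ b = (v : R) • (s * t : R) • LinearMap.id := hv
  replace hw : (w : R) • b ∘ₗ a = (w : R) • (s * t : R) • LinearMap.id := hw
  refine ⟨v * w * (s * t), (v * w * (s * t)).2, (v * w : R) • a, b, ?_, ?_⟩
  · rw [LinearMap.smul_comp, mul_comm (v : R), mul_smul, hv, smul_smul, smul_smul]
  · rw [LinearMap.comp_smul, mul_smul, hw, smul_smul, smul_smul]

lemma locallyIso_of_rank_eq [IsNoetherianRing R] [Module.Finite R M] {k : ℕ}
    (h_free : ∀ p : PrimeSpectrum R, ¬J ≤ p.asIdeal →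
      Module.Free (Localization.AtPrime p.asIdeal) (LocalizedModule p.asIdeal.primeCompl M))
    (h_rank : ∀ p : PrimeSpectrum R, ¬J ≤ p.asIdeal →
      Module.rank (Localization.AtPrime p.asIdeal) (LocalizedModule p.asIdeal.primeCompl M) = k) :
    LocallyIso J M (Fin k → R) := by
  intro p hp hJp
  have := Module.finitePresentation_of_finite R M
  have := h_free ⟨p, hp⟩ hJp
  have h_finrank := Module.finrank_eq_of_rank_eq (h_rank ⟨p, hp⟩ hJp)
  let b := Module.finBasisOfFinrankEq (Localization.AtPrime p) (LocalizedModule p.primeCompl M)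
    h_finrank
  exact exists_quasi_inverse_of_isLocalizedModule p.primeCompl
    (LocalizedModule.mkLinearMap p.primeCompl M)
    (LinearMap.pi fun i : Fin k ↦
      Algebra.linearMap R (Localization.AtPrime p) ∘ₗ LinearMap.proj i)
    (b.equivFun.restrictScalars R)

/-- A splitting of the complex `0 → M → N → L → 0` up to multiplication by `s`, that is, a homotopy
between multiplication by `s` and zero. -/
structure SplitUpTo (s : R) (f : M →ₗ[R] N) (g : N →ₗ[R] L) (τ : N →ₗ[R] M) (σ : L →ₗ[R] N) :
    Prop where
  retraction : τ ∘ₗ f = s • LinearMap.id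
  section_right : g ∘ₗ σ = s • LinearMap.id
  add_eq : f ∘ₗ τ + σ ∘ₗ g = s • LinearMap.id

variable (J) in
/-- The sequence `0 → M → N → L → 0` is a complex which is locally split exact on the complement of
`V(J)`. -/
structure LocallySplit (f : M →ₗ[R] N) (g : N →ₗ[R] L) : Prop where
  comp_eq_zero : g ∘ₗ f = 0
  exists_splitUpTo : ∀ p : Ideal R, p.IsPrime → ¬J ≤ p → ∃ s ∉ p, ∃ τ σ, SplitUpTo s f g τ σ

lemma exists_pow_smul_mem_of_le_powSaturation {V W : Submodule R M} (hV : V.FG)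
    (h : V ≤ powSaturation J W) {r : R} (hr : r ∈ J) : ∃ t : ℕ, ∀ x ∈ V, r ^ t • x ∈ W := by
  obtain ⟨t, ht⟩ := exists_pow_smul_le hV h
  exact ⟨t, fun x hx ↦ ht (Submodule.smul_mem_smul (Ideal.pow_mem_pow hr t) hx)⟩

namespace ShortExactModTorsion

variable {f : M →ₗ[R] N} {g : N →ₗ[R] L}

lemma exists_quasi_section [Module.Finite R F] [Module.Projective R F]
    (h : ShortExactModTorsion J f g) {r s : R} (hr : r ∈ J) {a : L →ₗ[R] F} {b : F →ₗ[R] L}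
    (hba : b ∘ₗ a = s • LinearMap.id) :
    ∃ (k : ℕ) (σ : L →ₗ[R] N), g ∘ₗ σ = (r ^ k * s) • LinearMap.id := by
  obtain ⟨k, hk⟩ := exists_pow_smul_mem_of_le_powSaturation
    (Module.Finite.iff_fg.1 (Module.Finite.range b)) (le_top.trans h.range_right.ge) hr
  let b' : F →ₗ[R] LinearMap.range g := (r ^ k • b).codRestrict _ fun y ↦ hk (b y) ⟨y, rfl⟩
  obtain ⟨σ, hσ⟩ :=
    Module.projective_lifting_property g.rangeRestrict b' g.surjective_rangeRestrict
  have hσ' : g ∘ₗ σ = r ^ k • b :=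
    LinearMap.ext fun y ↦ congrArg Subtype.val (LinearMap.congr_fun hσ y)
  refine ⟨k, σ ∘ₗ a, ?_⟩
  rw [← LinearMap.comp_assoc, hσ', LinearMap.smul_comp, hba, smul_smul]

lemma exists_splitUpTo [IsNoetherianRing R] [Module.Finite R N] (h : ShortExactModTorsion J f g)
    (hf : Function.Injective f) {r s : R} (hr : r ∈ J) {σ : L →ₗ[R] N}
    (hσ : g ∘ₗ σ = s • LinearMap.id) :
    ∃ (k : ℕ) (τ : N →ₗ[R] M), SplitUpTo (r ^ k * s) f g τ (r ^ k • σ) := by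
  let φ : N →ₗ[R] N := s • LinearMap.id - σ ∘ₗ g
  have hφ : LinearMap.range φ ≤ LinearMap.ker g := by
    rw [LinearMap.range_le_ker_iff, LinearMap.comp_sub, ← LinearMap.comp_assoc, hσ,
      LinearMap.comp_smul, LinearMap.smul_comp, LinearMap.comp_id, LinearMap.id_comp, sub_self]
  obtain ⟨k, hk⟩ := exists_pow_smul_mem_of_le_powSaturation (IsNoetherian.noetherian _)
    (hφ.trans h.ker_right_le) hr
  let e := LinearEquiv.ofInjective f hf
  let τ : N →ₗ[R] M := e.symm.toLinearMap ∘ₗ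
    (r ^ k • φ).codRestrict (LinearMap.range f) fun y ↦ hk (φ y) ⟨y, rfl⟩
  have hτ : f ∘ₗ τ = r ^ k • φ := LinearMap.ext fun y ↦
    congrArg Subtype.val (e.apply_symm_apply _)
  refine ⟨k, τ, ?_, ?_, ?_⟩
  · rw [← LinearMap.cancel_left hf, ← LinearMap.comp_assoc, hτ, LinearMap.smul_comp,
      LinearMap.sub_comp, LinearMap.comp_assoc, h.comp_eq_zero, LinearMap.comp_zero, sub_zero,
      LinearMap.smul_comp, LinearMap.id_comp, LinearMap.comp_smul, LinearMap.comp_id, smul_smul]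
  · rw [LinearMap.comp_smul, hσ, smul_smul]
  · rw [hτ, LinearMap.smul_comp, ← smul_add, sub_add_cancel, smul_smul]

theorem locallySplit [IsNoetherianRing R] [Module.Finite R N] [Module.Finite R F]
    [Module.Projective R F] (h : ShortExactModTorsion J f g) (hf : Function.Injective f)
    (hL : LocallyIso J L F) : LocallySplit J f g := by
  refine ⟨h.comp_eq_zero, fun p hp hJp ↦ ?_⟩
  obtain ⟨s, hsp, a, b, -, hba⟩ := hL p hp hJp
  obtain ⟨r, hrJ, hrp⟩ := SetLike.not_le_iff_exists.1 hJp
  obtain ⟨k, σ, hσ⟩ := h.exists_quasi_section hrJ hba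
  obtain ⟨l, τ, h_split⟩ := h.exists_splitUpTo hf hrJ hσ
  have hrp' (m : ℕ) : r ^ m ∉ p := fun hm ↦ hrp (hp.mem_of_pow_mem m hm)
  exact ⟨_, hp.mul_notMem (hrp' l) (hp.mul_notMem (hrp' k) hsp), τ, _, h_split⟩

end ShortExactModTorsion

end LocalSplitting

section ExteriorSquare

universe u

variable {R : Type u} [CommRing R]
variable {M N L : Type u} [AddCommGroup M] [Module R M] [AddCommGroup N] [Module R N]
  [AddCommGroup L] [Module R L]

variable (R) in
/-- The bilinear map `(x, y) ↦ x ∧ y`. -/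
def wedge : M →ₗ[R] M →ₗ[R] ⋀[R]^2 M :=
  LinearMap.mk₂ R (fun x y ↦ exteriorPower.ιMulti R 2 ![x, y])
    (fun x x' y ↦ (exteriorPower.ιMulti R 2).map_vecCons_add ![y] x x')
    (fun c x y ↦ (exteriorPower.ιMulti R 2).map_vecCons_smul ![y] c x)
    (fun x y y' ↦ ((exteriorPower.ιMulti R 2).curryLeft x).map_vecCons_add ![] y y')
    (fun c x y ↦ ((exteriorPower.ιMulti R 2).curryLeft x).map_vecCons_smul ![] c y)

lemma wedge_apply (x y : M) : wedge R x y = exteriorPower.ιMulti R 2 ![x, y] := rfl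

lemma wedge_isAlt : (wedge R (M := M)).IsAlt := fun x ↦
  (exteriorPower.ιMulti R 2).map_eq_zero_of_eq ![x, x] (i := 0) (j := 1) rfl Fin.zero_ne_one

lemma wedge_hom_ext {f g : ⋀[R]^2 M →ₗ[R] N} (h : ∀ x y, f (wedge R x y) = g (wedge R x y)) :
    f = g := by
  refine exteriorPower.linearMap_ext (AlternatingMap.ext fun v ↦ ?_)
  rw [← List.ofFn_inj.1 (by simp : List.ofFn ![v 0, v 1] = List.ofFn v)]
  exact h (v 0) (v 1)

/-- The linear map `⋀² M → N` induced by an alternating bilinear map on `M`. -/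
def wedgeLift (b : M →ₗ[R] M →ₗ[R] N) (hb : b.IsAlt) : ⋀[R]^2 M →ₗ[R] N :=
  exteriorPower.alternatingMapLinearEquiv
    { toFun := fun v ↦ b (v 0) (v 1)
      map_update_add' := fun {inst} v i x y ↦ by
        obtain rfl : inst = instDecidableEqFin 2 := Subsingleton.elim _ _
        fin_cases i <;> simp
      map_update_smul' := fun {inst} v i c x ↦ by
        obtain rfl : inst = instDecidableEqFin 2 := Subsingleton.elim _ _
        fin_cases i <;> simp
      map_eq_zero_of_eq' := fun v i j hv hij ↦ by
        have h_eq : v 0 = v 1 := by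
          fin_cases i <;> fin_cases j <;> simp_all
        rw [h_eq]
        exact hb _ }

@[simp] lemma wedgeLift_wedge (b : M →ₗ[R] M →ₗ[R] N) (hb : b.IsAlt) (x y : M) :
    wedgeLift b hb (wedge R x y) = b x y :=
  exteriorPower.alternatingMapLinearEquiv_apply_ιMulti _ _

@[simp] lemma exteriorPower_map_wedge (f : M →ₗ[R] N) (x y : M) :
    exteriorPower.map 2 f (wedge R x y) = wedge R (f x) (f y) := by
  rw [wedge_apply, exteriorPower.map_apply_ιMulti, wedge_apply]
  exact congrArg _ (List.ofFn_inj.1 (by simp))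

/-- The map `x ⊗ y ↦ f x ∧ y`. -/
def tensorToWedge (f : M →ₗ[R] N) : M ⊗[R] N →ₗ[R] ⋀[R]^2 N := TensorProduct.lift (wedge R ∘ₗ f)

@[simp] lemma tensorToWedge_tmul (f : M →ₗ[R] N) (x : M) (y : N) :
    tensorToWedge f (x ⊗ₜ y) = wedge R (f x) y := rfl

/-- The map `x ∧ y ↦ g x ⊗ y - g y ⊗ x`. -/
def wedgeToTensor (g : N →ₗ[R] L) : ⋀[R]^2 N →ₗ[R] L ⊗[R] N :=
  wedgeLift (TensorProduct.mk R L N ∘ₗ g - (TensorProduct.mk R L N ∘ₗ g).flip) fun x ↦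
    sub_self (g x ⊗ₜ[R] x)

@[simp] lemma wedgeToTensor_wedge (g : N →ₗ[R] L) (x y : N) :
    wedgeToTensor g (wedge R x y) = g x ⊗ₜ y - g y ⊗ₜ x :=
  wedgeLift_wedge _ _ x y

variable (R M) in
/-- The symmetric square of `M`, as the cokernel of the antisymmetrization `⋀² M → M ⊗ M`. -/
abbrev SymSquare : Type u :=
  (M ⊗[R] M) ⧸ LinearMap.range (wedgeToTensor (LinearMap.id : M →ₗ[R] M))

/-- The composite `L ⊗ N → L ⊗ L → S² L` induced by `g : N → L`. -/
def tensorToSymSquare (g : N →ₗ[R] L) : L ⊗[R] N →ₗ[R] SymSquare R L :=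
  (LinearMap.range (wedgeToTensor LinearMap.id)).mkQ ∘ₗ g.lTensor L

variable (R M) in
/-- The divided square of `M`, as the kernel of `M ⊗ M → ⋀² M`. -/
abbrev DividedSquare : Submodule R (M ⊗[R] M) :=
  LinearMap.ker (tensorToWedge (LinearMap.id : M →ₗ[R] M))

section Identities

lemma lTensor_wedgeToTensor (g : N →ₗ[R] L) (z : ⋀[R]^2 N) :
    g.lTensor L (wedgeToTensor g z) = wedgeToTensor LinearMap.id (exteriorPower.map 2 g z) := by
  refine LinearMap.congr_fun (f := g.lTensor L ∘ₗ wedgeToTensor g)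
    (g := wedgeToTensor LinearMap.id ∘ₗ exteriorPower.map 2 g) (wedge_hom_ext fun x y ↦ ?_) z
  simp

lemma tensorToWedge_lTensor (f : M →ₗ[R] N) (z : M ⊗[R] M) :
    tensorToWedge f (f.lTensor M z) = exteriorPower.map 2 f (tensorToWedge LinearMap.id z) := by
  refine LinearMap.congr_fun (f := tensorToWedge f ∘ₗ f.lTensor M)
    (g := exteriorPower.map 2 f ∘ₗ tensorToWedge LinearMap.id) (TensorProduct.ext' fun x y ↦ ?_) z
  simp

lemma comm_wedgeToTensor_id (z : ⋀[R]^2 M) :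
    TensorProduct.comm R M M (wedgeToTensor LinearMap.id z) = -wedgeToTensor LinearMap.id z := by
  refine LinearMap.congr_fun
    (f := (TensorProduct.comm R M M).toLinearMap ∘ₗ wedgeToTensor LinearMap.id)
    (g := -wedgeToTensor LinearMap.id) (wedge_hom_ext fun x y ↦ ?_) z
  simp

lemma wedgeToTensor_comp_map {f : M →ₗ[R] N} {g : N →ₗ[R] L} (h : g ∘ₗ f = 0) :
    wedgeToTensor g ∘ₗ exteriorPower.map 2 f = 0 := by
  have h' (x : M) : g (f x) = 0 := LinearMap.congr_fun h x
  refine wedge_hom_ext fun x y ↦ ?_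
  simp [h']

lemma map_comp_tensorToWedge {f : M →ₗ[R] N} {g : N →ₗ[R] L} (h : g ∘ₗ f = 0) :
    exteriorPower.map 2 g ∘ₗ tensorToWedge f = 0 := by
  have h' (x : M) : g (f x) = 0 := LinearMap.congr_fun h x
  refine TensorProduct.ext' fun x y ↦ ?_
  simp [h']

variable {s : R} {f : M →ₗ[R] N} {τ : N →ₗ[R] M} {g : N →ₗ[R] L} {σ : L →ₗ[R] N}

lemma exteriorPower_map_map_of_comp_eq_smul (h : g ∘ₗ σ = s • LinearMap.id) (z : ⋀[R]^2 L) :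
    exteriorPower.map 2 g (exteriorPower.map 2 σ z) = (s * s) • z := by
  have h' (x : L) : g (σ x) = s • x := LinearMap.congr_fun h x
  refine LinearMap.congr_fun (f := exteriorPower.map 2 g ∘ₗ exteriorPower.map 2 σ)
    (g := (s * s) • LinearMap.id) (wedge_hom_ext fun x y ↦ ?_) z
  simp [h', mul_smul]

lemma lTensor_lTensor_of_comp_eq_smul (h : g ∘ₗ σ = s • LinearMap.id) (z : M ⊗[R] L) :
    g.lTensor M (σ.lTensor M z) = s • z := by
  rw [← LinearMap.comp_apply, ← LinearMap.lTensor_comp, h, LinearMap.lTensor_smul,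
    LinearMap.lTensor_id, LinearMap.smul_apply, LinearMap.id_apply]

lemma smul_eq_of_add_eq_smul (h : f ∘ₗ τ + σ ∘ₗ g = s • LinearMap.id) (z : ⋀[R]^2 N) :
    (s * s) • z =
      exteriorPower.map 2 f (exteriorPower.map 2 τ z) + s • tensorToWedge σ (wedgeToTensor g z) -
        exteriorPower.map 2 σ (exteriorPower.map 2 g z) := by
  have h' (x : N) : f (τ x) = s • x - σ (g x) := eq_sub_of_add_eq (LinearMap.congr_fun h x)
  refine LinearMap.congr_fun (f := (s * s) • LinearMap.id)
    (g := exteriorPower.map 2 f ∘ₗ exteriorPower.map 2 τ +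
      s • tensorToWedge σ ∘ₗ wedgeToTensor g - exteriorPower.map 2 σ ∘ₗ exteriorPower.map 2 g)
    (wedge_hom_ext fun x y ↦ ?_) z
  simp only [LinearMap.smul_apply, LinearMap.id_apply, LinearMap.sub_apply, LinearMap.add_apply,
    LinearMap.comp_apply, exteriorPower_map_wedge, wedgeToTensor_wedge, tensorToWedge_tmul, h',
    map_sub, map_smul, ← wedge_isAlt.neg (σ (g y)) x]
  module

lemma smul_eq_wedgeToTensor_add (h : g ∘ₗ σ = s • LinearMap.id) (z : L ⊗[R] N) :
    s • z = wedgeToTensor g (tensorToWedge σ z) +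
      σ.lTensor L (TensorProduct.comm R L L (g.lTensor L z)) := by
  have h' (x : L) : g (σ x) = s • x := LinearMap.congr_fun h x
  refine LinearMap.congr_fun (f := s • LinearMap.id)
    (g := wedgeToTensor g ∘ₗ tensorToWedge σ +
      σ.lTensor L ∘ₗ (TensorProduct.comm R L L).toLinearMap ∘ₗ g.lTensor L)
    (TensorProduct.ext' fun x y ↦ ?_) z
  simp [h', smul_tmul']

lemma wedgeToTensor_map (h : g ∘ₗ σ = s • LinearMap.id) (z : ⋀[R]^2 L) :
    wedgeToTensor g (exteriorPower.map 2 σ z) = s • σ.lTensor L (wedgeToTensor LinearMap.id z) := by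
  have h' (x : L) : g (σ x) = s • x := LinearMap.congr_fun h x
  refine LinearMap.congr_fun (f := wedgeToTensor g ∘ₗ exteriorPower.map 2 σ)
    (g := s • σ.lTensor L ∘ₗ wedgeToTensor LinearMap.id) (wedge_hom_ext fun x y ↦ ?_) z
  simp [h', smul_tmul', smul_sub]

end Identities

section Free

lemma tensorToWedge_id_surjective :
    Function.Surjective (tensorToWedge (LinearMap.id : M →ₗ[R] M)) := by
  rw [← LinearMap.range_eq_top, eq_top_iff, ← exteriorPower.ιMulti_span, Submodule.span_le]
  rintro _ ⟨v, rfl⟩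
  refine ⟨v 0 ⊗ₜ v 1, ?_⟩
  rw [tensorToWedge_tmul, wedge_apply]
  exact congrArg _ (List.ofFn_inj.1 (by simp))

variable (R M) in
lemma exists_comp_wedgeToTensor_id_eq_id [Module.Free R M] :
    ∃ ρ : M ⊗[R] M →ₗ[R] ⋀[R]^2 M, ρ ∘ₗ wedgeToTensor LinearMap.id = LinearMap.id := by
  classical
  let b := Module.Free.chooseBasis R M
  let : LinearOrder (Module.Free.ChooseBasisIndex R M) := linearOrderOfSTO WellOrderingRel
  let ρ : M ⊗[R] M →ₗ[R] ⋀[R]^2 M :=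
    (b.tensorProduct b).constr R fun ij ↦ if ij.1 < ij.2 then wedge R (b ij.1) (b ij.2) else 0
  have hρ (i j) : ρ (b i ⊗ₜ b j) = if i < j then wedge R (b i) (b j) else 0 := by
    rw [← Module.Basis.tensorProduct_apply, Module.Basis.constr_basis]
  have h_ext : (wedge R).compr₂ (ρ ∘ₗ wedgeToTensor LinearMap.id) = wedge R := by
    refine b.ext fun i ↦ b.ext fun j ↦ ?_
    rw [LinearMap.compr₂_apply, LinearMap.comp_apply, wedgeToTensor_wedge, map_sub,
      LinearMap.id_apply, LinearMap.id_apply, hρ, hρ]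
    obtain h | rfl | h := lt_trichotomy i j
    · rw [if_pos h, if_neg h.not_gt, sub_zero]
    · rw [sub_self, wedge_isAlt]
    · rw [if_pos h, if_neg h.not_gt, zero_sub, wedge_isAlt.neg]
  exact ⟨ρ, wedge_hom_ext fun x y ↦ LinearMap.congr_fun₂ h_ext x y⟩

instance [Module.Free R M] : Module.Projective R (SymSquare R M) := by
  obtain ⟨ρ, hρ⟩ := exists_comp_wedgeToTensor_id_eq_id R M
  let e : M ⊗[R] M →ₗ[R] M ⊗[R] M := LinearMap.id - wedgeToTensor LinearMap.id ∘ₗ ρ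
  have he : LinearMap.range (wedgeToTensor LinearMap.id) ≤ LinearMap.ker e := by
    rw [LinearMap.range_le_ker_iff, LinearMap.sub_comp, LinearMap.comp_assoc, hρ,
      LinearMap.comp_id, LinearMap.id_comp, sub_self]
  refine Module.Projective.of_split (Submodule.liftQ _ e he) (Submodule.mkQ _)
    (Submodule.linearMap_qext _ (LinearMap.ext fun z ↦ ?_))
  rw [LinearMap.comp_assoc, Submodule.liftQ_mkQ, LinearMap.id_comp, LinearMap.comp_apply,
    LinearMap.sub_apply, map_sub, LinearMap.id_apply, LinearMap.comp_apply, sub_eq_self]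
  exact (Submodule.Quotient.mk_eq_zero _).2 ⟨ρ z, rfl⟩

lemma projective_ker [Module.Projective R M] [Module.Projective R N] {q : M →ₗ[R] N}
    (hq : Function.Surjective q) : Module.Projective R (LinearMap.ker q) := by
  obtain ⟨s, hs⟩ := Module.projective_lifting_property q LinearMap.id hq
  refine Module.Projective.of_split (LinearMap.ker q).subtype
    ((LinearMap.id - s ∘ₗ q).codRestrict _ fun x ↦ ?_) (LinearMap.ext fun x ↦ Subtype.ext ?_)
  · simp
  · rw [LinearMap.mem_ker, LinearMap.sub_apply, map_sub, sub_eq_zero]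
    exact (LinearMap.congr_fun hs (q x)).symm

instance [Module.Free R M] : Module.Projective R (DividedSquare R M) :=
  projective_ker tensorToWedge_id_surjective

end Free

end ExteriorSquare

section FourTerm

universe u

variable {R : Type u} [CommRing R]
variable {M N L Q : Type u} [AddCommGroup M] [Module R M] [AddCommGroup N] [Module R N]
  [AddCommGroup L] [Module R L] [AddCommGroup Q] [Module R Q]

lemma ShortExactModTorsion.of_ker {J : Ideal R} {g : N →ₗ[R] L}
    (hg : powSaturation J (LinearMap.range g) = ⊤) :
    ShortExactModTorsion J (LinearMap.ker g).subtype g where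
  comp_eq_zero := LinearMap.ext fun x ↦ x.2
  ker_left_le := (Submodule.ker_subtype _).trans_le bot_le
  ker_right_le := by
    rw [Submodule.range_subtype]
    exact le_powSaturation J _
  range_right := hg

/-- The sequence `0 → M → N → L → Q → 0` is a complex whose cohomology is `J`-power torsion, i.e. it
induces an exact sequence of sheaves on the complement of `V(J)`. -/
structure FourTermExactModTorsion (J : Ideal R) (d₀ : M →ₗ[R] N) (d₁ : N →ₗ[R] L) (d₂ : L →ₗ[R] Q) :
    Prop where
  comp_left : d₁ ∘ₗ d₀ = 0
  comp_right : d₂ ∘ₗ d₁ = 0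
  ker_left_le : LinearMap.ker d₀ ≤ powSaturation J ⊥
  ker_middle_le : LinearMap.ker d₁ ≤ powSaturation J (LinearMap.range d₀)
  ker_right_le : LinearMap.ker d₂ ≤ powSaturation J (LinearMap.range d₁)
  range_right : powSaturation J (LinearMap.range d₂) = ⊤

namespace FourTermExactModTorsion

variable {J : Ideal R} {d₀ : M →ₗ[R] N} {d₁ : N →ₗ[R] L} {d₂ : L →ₗ[R] Q}

lemma apply_mem_ker (h : FourTermExactModTorsion J d₀ d₁ d₂) (x : N) : d₁ x ∈ LinearMap.ker d₂ :=
  LinearMap.congr_fun h.comp_right x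

lemma left (h : FourTermExactModTorsion J d₀ d₁ d₂) :
    ShortExactModTorsion J d₀ (d₁.codRestrict (LinearMap.ker d₂) h.apply_mem_ker) where
  comp_eq_zero := LinearMap.ext fun x ↦ Subtype.ext (LinearMap.congr_fun h.comp_left x)
  ker_left_le := h.ker_left_le
  ker_right_le := (LinearMap.ker_codRestrict _ _ _).trans_le h.ker_middle_le
  range_right := by
    rw [LinearMap.range_codRestrict, powSaturation_comap]
    exact Submodule.comap_subtype_eq_top.2 h.ker_right_le

lemma right (h : FourTermExactModTorsion J d₀ d₁ d₂) :
    ShortExactModTorsion J (LinearMap.ker d₂).subtype d₂ :=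
  .of_ker h.range_right

end FourTermExactModTorsion

lemma powSaturation_eq_top_of_forall_prime [IsNoetherianRing R] {J : Ideal R} {W : Submodule R M}
    (h : ∀ p : Ideal R, p.IsPrime → ¬J ≤ p → ∃ s ∉ p, ∀ x : M, s • x ∈ W) :
    powSaturation J W = ⊤ :=
  eq_top_iff.2 fun x _ ↦ mem_powSaturation_of_forall_prime fun p hp hJp ↦
    (h p hp hJp).imp fun _ hs ↦ ⟨hs.1, hs.2 x⟩

namespace LocallySplit

variable [IsNoetherianRing R] {J : Ideal R} {f : M →ₗ[R] N} {g : N →ₗ[R] L}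

theorem fourTermExactModTorsion_symSquare [Module.Free R L] (h : LocallySplit J f g) :
    FourTermExactModTorsion J (exteriorPower.map 2 f) (wedgeToTensor g)
      (tensorToSymSquare g) where
  comp_left := wedgeToTensor_comp_map h.comp_eq_zero
  comp_right := LinearMap.ext fun z ↦ (Submodule.Quotient.mk_eq_zero _).2
    ⟨exteriorPower.map 2 g z, (lTensor_wedgeToTensor g z).symm⟩
  ker_left_le z (hz : exteriorPower.map 2 f z = 0) :=
    mem_powSaturation_of_forall_prime fun p hp hJp ↦ by
      obtain ⟨s, hsp, τ, σ, hs⟩ := h.exists_splitUpTo p hp hJp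
      refine ⟨s * s, hp.mul_notMem hsp hsp, (Submodule.mem_bot R).2 ?_⟩
      rw [← exteriorPower_map_map_of_comp_eq_smul hs.retraction, hz, map_zero]
  ker_middle_le z (hz : wedgeToTensor g z = 0) :=
    mem_powSaturation_of_forall_prime fun p hp hJp ↦ by
      obtain ⟨s, hsp, τ, σ, hs⟩ := h.exists_splitUpTo p hp hJp
      obtain ⟨ρ, hρ⟩ := exists_comp_wedgeToTensor_id_eq_id R L
      have h_map : exteriorPower.map 2 g z = 0 := by
        rw [← LinearMap.id_apply (R := R) (exteriorPower.map 2 g z), ← hρ, LinearMap.comp_apply,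
          ← lTensor_wedgeToTensor, hz, map_zero, map_zero]
      refine ⟨s * s, hp.mul_notMem hsp hsp, exteriorPower.map 2 τ z, ?_⟩
      rw [smul_eq_of_add_eq_smul hs.add_eq, hz, h_map, map_zero, map_zero, smul_zero, add_zero,
        sub_zero]
  ker_right_le z hz :=
    mem_powSaturation_of_forall_prime fun p hp hJp ↦ by
      obtain ⟨s, hsp, τ, σ, hs⟩ := h.exists_splitUpTo p hp hJp
      obtain ⟨w, hw⟩ : g.lTensor L z ∈ LinearMap.range (wedgeToTensor LinearMap.id) :=
        (Submodule.Quotient.mk_eq_zero _).1 hz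
      refine ⟨s * s, hp.mul_notMem hsp hsp,
        s • tensorToWedge σ z - exteriorPower.map 2 σ w, ?_⟩
      rw [mul_smul, smul_eq_wedgeToTensor_add hs.section_right z, ← hw, comm_wedgeToTensor_id,
        map_sub, map_smul, wedgeToTensor_map hs.section_right, map_neg, smul_add, smul_neg,
        sub_eq_add_neg]
  range_right := powSaturation_eq_top_of_forall_prime fun p hp hJp ↦ by
    obtain ⟨s, hsp, τ, σ, hs⟩ := h.exists_splitUpTo p hp hJp
    refine ⟨s, hsp, fun x ↦ ?_⟩
    obtain ⟨z, rfl⟩ := Submodule.mkQ_surjective _ x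
    refine ⟨σ.lTensor L z, ?_⟩
    rw [tensorToSymSquare, LinearMap.comp_apply,
      lTensor_lTensor_of_comp_eq_smul hs.section_right, map_smul]

theorem fourTermExactModTorsion_dividedSquare (h : LocallySplit J f g) :
    FourTermExactModTorsion J (f.lTensor M ∘ₗ (DividedSquare R M).subtype) (tensorToWedge f)
      (exteriorPower.map 2 g) where
  comp_left := LinearMap.ext fun z ↦ by
    rw [LinearMap.comp_apply, LinearMap.comp_apply, tensorToWedge_lTensor, Submodule.subtype_apply,
      LinearMap.mem_ker.1 z.2, map_zero, LinearMap.zero_apply]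
  comp_right := map_comp_tensorToWedge h.comp_eq_zero
  ker_left_le z (hz : f.lTensor M z = 0) :=
    mem_powSaturation_of_forall_prime fun p hp hJp ↦ by
      obtain ⟨s, hsp, τ, σ, hs⟩ := h.exists_splitUpTo p hp hJp
      refine ⟨s, hsp, (Submodule.mem_bot R).2 (Subtype.ext ?_)⟩
      rw [Submodule.coe_smul, ← lTensor_lTensor_of_comp_eq_smul hs.retraction, hz, map_zero,
        Submodule.coe_zero]
  ker_middle_le z (hz : tensorToWedge f z = 0) :=
    mem_powSaturation_of_forall_prime fun p hp hJp ↦ by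
      obtain ⟨s, hsp, τ, σ, hs⟩ := h.exists_splitUpTo p hp hJp
      let w : M ⊗[R] M := TensorProduct.comm R M M (τ.lTensor M z)
      have hw : s • z = f.lTensor M w := by
        rw [smul_eq_wedgeToTensor_add hs.retraction, hz, map_zero, zero_add]
      have hw_mem : (s * s) • w ∈ DividedSquare R M := by
        rw [LinearMap.mem_ker, map_smul, ← exteriorPower_map_map_of_comp_eq_smul hs.retraction,
          ← tensorToWedge_lTensor, ← hw, map_smul, hz, smul_zero, map_zero]
      refine ⟨s * s * s, hp.mul_notMem (hp.mul_notMem hsp hsp) hsp, ⟨_, hw_mem⟩, ?_⟩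
      rw [LinearMap.comp_apply, Submodule.subtype_apply, map_smul, ← hw, ← mul_smul]
  ker_right_le z (hz : exteriorPower.map 2 g z = 0) :=
    mem_powSaturation_of_forall_prime fun p hp hJp ↦ by
      obtain ⟨s, hsp, τ, σ, hs⟩ := h.exists_splitUpTo p hp hJp
      obtain ⟨w, hw⟩ := tensorToWedge_id_surjective (exteriorPower.map 2 τ z)
      refine ⟨s * s, hp.mul_notMem hsp hsp, s • wedgeToTensor τ z - f.lTensor M w, ?_⟩
      rw [smul_eq_of_add_eq_smul ((add_comm _ _).trans hs.add_eq), hz, map_zero, zero_add,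
        map_sub, map_smul, tensorToWedge_lTensor, hw]
  range_right := powSaturation_eq_top_of_forall_prime fun p hp hJp ↦ by
    obtain ⟨s, hsp, τ, σ, hs⟩ := h.exists_splitUpTo p hp hJp
    refine ⟨s * s, hp.mul_notMem hsp hsp, fun x ↦ ⟨exteriorPower.map 2 σ x, ?_⟩⟩
    exact exteriorPower_map_map_of_comp_eq_smul hs.section_right x

end LocallySplit

end FourTerm

section LineBundle

universe u

variable {R : Type u} [CommRing R] {J : Ideal R}
variable {M N L : Type u} [AddCommGroup M] [Module R M] [AddCommGroup N] [Module R N]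
  [AddCommGroup L] [Module R L]

lemma LocallyIso.trans_linearEquiv (h : LocallyIso J M N) (e : N ≃ₗ[R] L) : LocallyIso J M L := by
  intro p hp hJp
  obtain ⟨s, hsp, a, b, hab, hba⟩ := h p hp hJp
  refine ⟨s, hsp, e.toLinearMap ∘ₗ a, b ∘ₗ e.symm.toLinearMap, ?_, ?_⟩
  · rw [LinearMap.comp_assoc, ← LinearMap.comp_assoc _ b a, hab, LinearMap.smul_comp,
      LinearMap.comp_smul, LinearMap.id_comp, LinearEquiv.comp_symm]
  · rw [LinearMap.comp_assoc, ← LinearMap.comp_assoc a, LinearEquiv.symm_comp, LinearMap.id_comp,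
      hba]

lemma LocallyIso.exteriorSquare (h : LocallyIso J M N) : LocallyIso J (⋀[R]^2 M) (⋀[R]^2 N) := by
  intro p hp hJp
  obtain ⟨s, hsp, a, b, hab, hba⟩ := h p hp hJp
  exact ⟨s * s, hp.mul_notMem hsp hsp, exteriorPower.map 2 a, exteriorPower.map 2 b,
    LinearMap.ext fun z ↦ exteriorPower_map_map_of_comp_eq_smul hab z,
    LinearMap.ext fun z ↦ exteriorPower_map_map_of_comp_eq_smul hba z⟩

variable (R) in
/-- The isomorphism `⋀² R² ≃ R`. -/
def exteriorSquareEquiv [Nontrivial R] : ⋀[R]^2 (Fin 2 → R) ≃ₗ[R] R :=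
  LinearEquiv.ofFinrankEq _ _ (by
    rw [exteriorPower.finrank_eq, Module.finrank_fin_fun, Nat.choose_self, Module.finrank_self])

variable [IsNoetherianRing R] [UniqueFactorizationMonoid R]

lemma exists_forall_dvd_and_forall_dvd_mul (u : M →ₗ[R] R) :
    ∃ d : R, (∀ x, d ∣ u x) ∧ ∀ r c, (∀ x, r ∣ c * u x) → r ∣ c * d := by
  classical
  let : StrongNormalizationMonoid R := UniqueFactorizationMonoid.strongNormalizationMonoid
  let : NormalizedGCDMonoid R := UniqueFactorizationMonoid.toNormalizedGCDMonoid R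
  obtain ⟨S, hS⟩ := IsNoetherian.noetherian (LinearMap.range u)
  refine ⟨S.gcd id, fun x ↦ ?_, fun r c h ↦ ?_⟩
  · have h_le : LinearMap.range u ≤ Ideal.span {S.gcd id} := by
      rw [← hS, Submodule.span_le]
      exact fun y hy ↦ Ideal.mem_span_singleton.2 (Finset.gcd_dvd (f := id) hy)
    exact Ideal.mem_span_singleton.1 (h_le ⟨x, rfl⟩)
  · have h_dvd : r ∣ S.gcd fun y ↦ c * id y := Finset.dvd_gcd fun y hy ↦ by
      obtain ⟨x, rfl⟩ : y ∈ LinearMap.range u := hS ▸ Submodule.subset_span hy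
      exact h x
    exact h_dvd.trans (Finset.gcd_mul_left' S id c).dvd

variable [IsDomain R]

lemma exists_primitive_part {u : M →ₗ[R] R} (hu : u ≠ 0) :
    ∃ φ : M →ₗ[R] R, (∃ d : R, u = d • φ) ∧ ∀ r c, (∀ x, r ∣ c * φ x) → r ∣ c := by
  obtain ⟨d, hdu, hd⟩ := exists_forall_dvd_and_forall_dvd_mul u
  have hd0 : d ≠ 0 := by
    rintro rfl
    exact hu (LinearMap.ext fun x ↦ zero_dvd_iff.1 (hdu x))
  choose φ hφ using hdu
  refine ⟨⟨⟨φ, fun x y ↦ mul_left_cancel₀ hd0 ?_⟩, fun r x ↦ mul_left_cancel₀ hd0 ?_⟩,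
    ⟨d, LinearMap.ext hφ⟩, fun r c h ↦ (mul_dvd_mul_iff_right hd0).1 (hd _ _ fun x ↦ ?_)⟩
  · rw [mul_add, ← hφ, ← hφ, ← hφ, map_add]
  · rw [← hφ, map_smul, hφ x, smul_eq_mul, RingHom.id_apply, smul_eq_mul, mul_left_comm]
  · rw [hφ, mul_left_comm, mul_comm d]
    exact mul_dvd_mul_right (h x) d

-- `φ` is the primitive part of an isomorphism at the generic point. Having no content, it is
-- divisible by nothing but units, so it agrees up to units with every local isomorphism `M ≃ R`.
theorem LocallyIso.exists_ker_le_range_eq_top (hJ : J ≠ ⊥) (h : LocallyIso J M R) :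
    ∃ φ : M →ₗ[R] R, LinearMap.ker φ ≤ powSaturation J ⊥ ∧
      powSaturation J (LinearMap.range φ) = ⊤ := by
  obtain ⟨s₀, hs₀, u, v, huv, hvu⟩ := h ⊥ Ideal.isPrime_bot fun h ↦ hJ (le_bot_iff.1 h)
  have hu : u ≠ 0 := by
    rintro rfl
    have h_one : 0 = s₀ • (1 : R) := LinearMap.congr_fun huv 1
    exact hs₀ (h_one.trans (mul_one s₀)).symm
  obtain ⟨φ, ⟨d, rfl⟩, hφ⟩ := exists_primitive_part hu
  refine ⟨φ, fun x (hx : φ x = 0) ↦ mem_powSaturation_of_forall_prime fun p hp hJp ↦ ?_,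
    powSaturation_eq_top_of_forall_prime fun p hp hJp ↦ ?_⟩
  all_goals obtain ⟨s, hsp, a, b, -, hba⟩ := h p hp hJp
  · have h_smul : s₀ • x = 0 := by
      rw [← LinearMap.id_apply (R := R) x, ← LinearMap.smul_apply, ← hvu, LinearMap.comp_apply,
        LinearMap.smul_apply, hx, smul_zero, map_zero]
    have h_mul : s₀ * a x = 0 := by rw [← smul_eq_mul, ← map_smul, h_smul, map_zero]
    refine ⟨s, hsp, (Submodule.mem_bot R).2 ?_⟩
    rw [← LinearMap.id_apply (R := R) x, ← LinearMap.smul_apply, ← hba, LinearMap.comp_apply,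
      (mul_eq_zero.1 h_mul).resolve_left hs₀, map_zero]
  · have h_mul (x : M) : s * φ x = φ (b 1) * a x := by
      have h_smul : s • x = a x • b 1 := by
        rw [← map_smul, smul_eq_mul, mul_one]
        exact (LinearMap.congr_fun hba x).symm
      rw [← smul_eq_mul, ← map_smul, h_smul, map_smul, smul_eq_mul, mul_comm]
    obtain ⟨c, hc⟩ : φ (b 1) ∣ s := hφ _ _ fun x ↦ ⟨a x, h_mul x⟩
    refine ⟨s, hsp, fun y ↦ ⟨(c * y) • b 1, ?_⟩⟩
    rw [map_smul, hc, smul_eq_mul, smul_eq_mul]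
    ring

theorem LocallyIso.subsingleton_localCoh (hJ : J ≠ ⊥) (h : LocallyIso J M R) {i : ℕ}
    [Subsingleton (LocalCoh J (i + 2) R)] : Subsingleton (LocalCoh J (i + 2) M) := by
  obtain ⟨φ, hker, hrange⟩ := h.exists_ker_le_range_eq_top hJ
  exact (LocalCoh.map_bijective hker hrange i).injective.subsingleton

end LineBundle

section Monad

universe u

variable {R : Type u} [CommRing R] [IsNoetherianRing R] {J : Ideal R}
variable {M N L : Type u} [AddCommGroup M] [Module R M] [AddCommGroup N] [Module R N]
  [AddCommGroup L] [Module R L] {f : M →ₗ[R] N} {g : N →ₗ[R] L}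

namespace ShortExactModTorsion

lemma map_left_bijective (h : ShortExactModTorsion J f g) (i : ℕ)
    [Subsingleton (LocalCoh J (i + 2) L)] [Subsingleton (LocalCoh J (i + 3) L)] :
    Function.Bijective (LocalCoh.map J (i + 3) f) := by
  obtain ⟨-, δ, -, hδ⟩ := h.exists_long_exact i
  exact ⟨LocalCoh.injective_of_exact hδ,
    LocalCoh.surjective_of_exact (h.exists_long_exact (i + 1)).1⟩

lemma map_right_bijective (h : ShortExactModTorsion J f g) (i : ℕ)
    [Subsingleton (LocalCoh J (i + 2) M)] [Subsingleton (LocalCoh J (i + 3) M)] :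
    Function.Bijective (LocalCoh.map J (i + 2) g) := by
  obtain ⟨h_exact, δ, hδ, -⟩ := h.exists_long_exact i
  exact ⟨LocalCoh.injective_of_exact h_exact, LocalCoh.surjective_of_exact hδ⟩

variable {n k : ℕ}

theorem nonempty_localCoh_ker_tensorToSymSquare_equiv
    (hR : ∀ i ≤ n, Subsingleton (LocalCoh J i R)) [Module.Finite R N] [Module.Free R L]
    [Module.Finite R L] (h : ShortExactModTorsion J f g) (hf : Function.Injective f)
    (hk : k + 3 ≤ n) :
    Nonempty (LocalCoh J (k + 3) (LinearMap.ker (tensorToSymSquare g)) ≃ₗ[R]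
      L ⊗[R] LocalCoh J (k + 3) M) := by
  have h_four := (h.locallySplit hf (LocallyIso.refl J L)).fourTermExactModTorsion_symSquare
  have := hR (k + 2) (by omega)
  have := hR (k + 3) hk
  exact ⟨LinearEquiv.ofBijective _ (h_four.right.map_left_bijective k) ≪≫ₗ
    LocalCoh.tensorEquiv J (k + 3) L N ≪≫ₗ
    (LinearEquiv.ofBijective _ (h.map_left_bijective k)).symm.lTensor L⟩

theorem nonempty_localCoh_exteriorSquare_equiv
    (hR : ∀ i ≤ n, Subsingleton (LocalCoh J i R)) [IsDomain R] [UniqueFactorizationMonoid R]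
    (hJ : J ≠ ⊥) [Module.Free R M] [Module.Finite R M] [Module.Finite R N]
    (h : ShortExactModTorsion J f g) (hf : Function.Injective f)
    (hL : LocallyIso J L (Fin 2 → R)) (hk : k + 4 ≤ n) :
    Nonempty (LocalCoh J (k + 3) (⋀[R]^2 N) ≃ₗ[R] M ⊗[R] LocalCoh J (k + 3) L) := by
  have h_four := (h.locallySplit hf hL).fourTermExactModTorsion_dividedSquare
  have := hR (k + 2) (by omega)
  have := hR (k + 3) (by omega)
  have := hR (k + 4) hk
  have h_line := hL.exteriorSquare.trans_linearEquiv (exteriorSquareEquiv R)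
  have := h_line.subsingleton_localCoh hJ (i := k)
  have := h_line.subsingleton_localCoh hJ (i := k + 1)
  exact ⟨(LinearEquiv.ofBijective _ (h_four.right.map_left_bijective k)).symm ≪≫ₗ
    (LinearEquiv.ofBijective _ (h_four.left.map_right_bijective (k + 1))).symm ≪≫ₗ
    LocalCoh.tensorEquiv J (k + 3) M N ≪≫ₗ
    (LinearEquiv.ofBijective _ (h.map_right_bijective (k + 1))).lTensor M⟩

end ShortExactModTorsion

end Monad

section MonadHomology

variable {R : Type} [CommRing R] {J : Ideal R}
variable {A P B E : Type} [AddCommGroup A] [Module R A] [AddCommGroup P] [Module R P]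
  [AddCommGroup B] [Module R B] [AddCommGroup E] [Module R E]
variable {α : A →ₗ[R] P} {β : P →ₗ[R] B}

namespace MonadHomology

variable (α β) in
/-- The quotient map `ker β → ker β / im α`. -/
def mk : LinearMap.ker β →ₗ[R] MonadHomology α β :=
  ((LinearMap.range α).comap (LinearMap.ker β).subtype).mkQ

lemma mk_surjective : Function.Surjective (mk α β) := Submodule.mkQ_surjective _

lemma ker_mk : LinearMap.ker (mk α β) = (LinearMap.range α).comap (LinearMap.ker β).subtype :=
  Submodule.ker_mkQ _

lemma shortExactModTorsion (hα : Function.Injective α) (hβα : ∀ x, α x ∈ LinearMap.ker β)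
    {u : MonadHomology α β →ₗ[R] E} (hu_ker : LinearMap.ker u ≤ powSaturation J ⊥)
    (hu_range : powSaturation J (LinearMap.range u) = ⊤) :
    ShortExactModTorsion J (α.codRestrict (LinearMap.ker β) hβα) (u ∘ₗ mk α β) where
  comp_eq_zero := by
    have h_zero : mk α β ∘ₗ α.codRestrict (LinearMap.ker β) hβα = 0 := by
      rw [← LinearMap.range_le_ker_iff, ker_mk, LinearMap.range_codRestrict]
    rw [LinearMap.comp_assoc, h_zero, LinearMap.comp_zero]
  ker_left_le := by
    rw [LinearMap.ker_codRestrict, LinearMap.ker_eq_bot.2 hα]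
    exact bot_le
  ker_right_le := by
    rw [LinearMap.ker_comp, LinearMap.range_codRestrict, ← ker_mk]
    exact (Submodule.comap_mono hu_ker).trans (powSaturation_comap J (mk α β) ⊥).ge
  range_right := by
    rwa [LinearMap.range_comp_of_range_eq_top u (LinearMap.range_eq_top.2 mk_surjective)]

end MonadHomology

lemma ker_le_powSaturation_bot {f : P →ₗ[R] B}
    (hf : ∃ c, J ^ c ≤ Module.annihilator R (LinearMap.ker f)) :
    LinearMap.ker f ≤ powSaturation J ⊥ :=
  fun x hx ↦ hf.imp fun _ hc _ hr ↦ (Submodule.mem_bot R).2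
    (congrArg Subtype.val (Module.mem_annihilator.1 (hc hr) ⟨x, hx⟩))

lemma powSaturation_range_eq_top {f : P →ₗ[R] B}
    (hf : ∃ c, J ^ c ≤ Module.annihilator R (B ⧸ LinearMap.range f)) :
    powSaturation J (LinearMap.range f) = ⊤ :=
  eq_top_iff.2 fun y _ ↦ hf.imp fun _ hc _ hr ↦ (Submodule.Quotient.mk_eq_zero _).1
    (Module.mem_annihilator.1 (hc hr) (Submodule.Quotient.mk y))

end MonadHomology

open ShortExactModTorsion in
theorem wedge2_cohomology_sequence_general {R : Type} [CommRing R] [IsDomain R] [IsNoetherianRing R]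
    [UniqueFactorizationMonoid R] {J : Ideal R} (hJ : J ≠ ⊥) {n t : ℕ}
    (hR : ∀ i ≤ n, Subsingleton (LocalCoh J i R)) {A P B E : Type}
    [AddCommGroup A] [Module R A] [Module.Free R A] [Module.Finite R A]
    [AddCommGroup B] [Module R B] [Module.Free R B] [Module.Finite R B]
    [AddCommGroup P] [Module R P] [Module.Finite R P] [AddCommGroup E] [Module R E]
    {α : A →ₗ[R] P} {β : P →ₗ[R] B} (hβα : β ∘ₗ α = 0) (hα : Function.Injective α)
    (hβ : powSaturation J (LinearMap.range β) = ⊤) {u : MonadHomology α β →ₗ[R] E}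
    (hu_ker : LinearMap.ker u ≤ powSaturation J ⊥)
    (hu_range : powSaturation J (LinearMap.range u) = ⊤) (hE : LocallyIso J E (Fin 2 → R))
    (ht : 2 ≤ t) (htn : t + 2 ≤ n) :
    ∃ (f : A ⊗[R] LocalCoh J (t + 1) E →ₗ[R] LocalCoh J (t + 1) (⋀[R]^2 P))
      (g : LocalCoh J (t + 1) (⋀[R]^2 P) →ₗ[R] B ⊗[R] LocalCoh J (t + 1) E),
      Function.Exact f g ∧
      (3 ≤ t → Subsingleton (LocalCoh J t E) → Function.Injective f) ∧
      (t + 3 ≤ n → Subsingleton (LocalCoh J (t + 2) E) → Function.Surjective g) := by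
  have hι := (LinearMap.ker β).injective_subtype
  have hιβ : ShortExactModTorsion J (LinearMap.ker β).subtype β := .of_ker hβ
  have hγ : Function.Injective (α.codRestrict (LinearMap.ker β) (LinearMap.congr_fun hβα)) :=
    fun _ _ h ↦ hα (congrArg Subtype.val h)
  have hγπ := MonadHomology.shortExactModTorsion hα (LinearMap.congr_fun hβα) hu_ker hu_range
  obtain ⟨k, rfl⟩ := Nat.exists_eq_add_of_le' ht
  have h_four := (hιβ.locallySplit hι (LocallyIso.refl J B)).fourTermExactModTorsion_symSquare
  have h_ker (l : ℕ) (hl : l + 4 ≤ n) : Nonempty (LocalCoh J (l + 3)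
      (LinearMap.ker (tensorToSymSquare β)) ≃ₗ[R] B ⊗[R] LocalCoh J (l + 3) E) := by
    have := hR (l + 3) (by omega)
    have := hR (l + 4) hl
    obtain ⟨e⟩ := nonempty_localCoh_ker_tensorToSymSquare_equiv hR hιβ hι (k := l) (by omega)
    exact ⟨e ≪≫ₗ (LinearEquiv.ofBijective _ (hγπ.map_right_bijective (l + 1))).lTensor B⟩
  have h_ext (l : ℕ) (hl : l + 4 ≤ n) :=
    nonempty_localCoh_exteriorSquare_equiv hR hJ hγπ hγ hE hl
  obtain ⟨eB⟩ := h_ker k htn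
  obtain ⟨eA⟩ := h_ext k htn
  obtain ⟨h_exact, δ, hδ, -⟩ := h_four.left.exists_long_exact (k + 1)
  refine ⟨LocalCoh.map J (k + 3) (exteriorPower.map 2 _) ∘ₗ eA.symm.toLinearMap,
    eB.toLinearMap ∘ₗ LocalCoh.map J (k + 3) _,
    (eB.injective.comp_exact_iff_exact ..).2
      ((eA.symm.surjective.comp_exact_iff_exact ..).2 h_exact),
    fun ht' hs ↦ ?_, fun ht' hs ↦ ?_⟩
  · obtain ⟨l, rfl⟩ := Nat.exists_eq_add_of_le' (show 1 ≤ k by omega)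
    obtain ⟨e⟩ := h_ker l (by omega)
    have := e.injective.subsingleton
    obtain ⟨-, δ, -, hδ⟩ := h_four.left.exists_long_exact (l + 1)
    exact (LocalCoh.injective_of_exact hδ).comp eA.symm.injective
  · obtain ⟨e⟩ := h_ext (k + 1) (by omega)
    have := e.injective.subsingleton
    exact eB.surjective.comp (LocalCoh.surjective_of_exact hδ)

section ProjectiveSpace

lemma X_mem_irrel (i : Fin (n + 1)) : MvPolynomial.X i ∈ irrel K n := Ideal.subset_span ⟨i, rfl⟩

lemma irrel_ne_bot : irrel K n ≠ ⊥ := fun h ↦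
  MvPolynomial.X_ne_zero (0 : Fin (n + 1))
    ((Submodule.mem_bot (PolyS K n)).1 (h ▸ X_mem_irrel K n 0))

lemma subsingleton_localCoh_irrel {i : ℕ} (hi : i ≤ n) :
    Subsingleton (LocalCoh (irrel K n) i (PolyS K n)) :=
  LocalCoh.subsingleton_of_isWeaklyRegular
    (List.forall_mem_map.2 fun i _ ↦ X_mem_irrel K n i)
    (isWeaklyRegular_map_X (List.nodup_finRange (n + 1))) (by simpa using Nat.lt_succ_of_le hi)

end ProjectiveSpace

/-- For a rank two bundle `E` on `ℙⁿ` with minimal monad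
`0 → A → P → B → 0` (`A, B` free) and `N_t = H^t_*(E)`, for `2 ≤ t ≤ n-2` there is an
exact sequence `A ⊗ N_t → H^t_*(Λ²P) → B ⊗ N_t` of graded `S`-modules, injective on
the left if `t ≥ 3` and `N_{t-1} = 0`, and surjective on the right if `t ≤ n-3` and
`N_{t+1} = 0`. -/
theorem wedge2_cohomology_sequence
    (K : Type) [Field K] (n : ℕ)
    (A B P : Type) [AddCommGroup A] [Module (PolyS K n) A]
    [AddCommGroup B] [Module (PolyS K n) B] [AddCommGroup P] [Module (PolyS K n) P]
    (hAfree : Module.Free (PolyS K n) A) (hAfin : Module.Finite (PolyS K n) A)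
    (hBfree : Module.Free (PolyS K n) B) (hBfin : Module.Finite (PolyS K n) B)
    (hP : IsBundleModule K n P)
    (hP1 : Subsingleton (Hstar K n 1 P))
    (hPn1 : Subsingleton (Hstar K n (n-1) P))
    (α : A →ₗ[PolyS K n] P) (β : P →ₗ[PolyS K n] B)
    (hβα : β.comp α = 0)
    (hαinj : Function.Injective α)
    (hsubbundle : ∀ p : PrimeSpectrum (PolyS K n), p.asIdeal ≠ irrel K n →
      Module.Free (Localization.AtPrime p.asIdeal)
        (LocalizedModule p.asIdeal.primeCompl (P ⧸ LinearMap.range α)))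
    (hβsurj : ∃ c : ℕ, (irrel K n) ^ c ≤
      Module.annihilator (PolyS K n) (B ⧸ LinearMap.range β))
    (hαmin : LinearMap.range α ≤ (irrel K n) • (⊤ : Submodule (PolyS K n) P))
    (hβmin : LinearMap.range β ≤ (irrel K n) • (⊤ : Submodule (PolyS K n) B))
    (E : Type) [AddCommGroup E] [Module (PolyS K n) E]
    (hcoh : ∃ f : MonadHomology α β →ₗ[PolyS K n] E, IsSheafIso K n f)
    (hE : IsRankTwoBundleModule K n E)
    (t : ℕ) (ht1 : 2 ≤ t) (ht2 : t ≤ n - 2) :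
    ∃ (f : TensorProduct (PolyS K n) A ↥(Hstar K n t E) →ₗ[PolyS K n]
        ↥(Hstar K n t (⋀[PolyS K n]^2 P)))
      (g : ↥(Hstar K n t (⋀[PolyS K n]^2 P)) →ₗ[PolyS K n]
        TensorProduct (PolyS K n) B ↥(Hstar K n t E)),
      Function.Exact f g ∧
      (3 ≤ t → Subsingleton (Hstar K n (t-1) E) → Function.Injective f) ∧
      (t ≤ n - 3 → Subsingleton (Hstar K n (t+1) E) → Function.Surjective g) := by
  obtain ⟨u, hu_ker, hu_coker⟩ := hcoh
  have := hP.finite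
  have := hE.finite
  have hE2 : LocallyIso (irrel K n) E (Fin 2 → PolyS K n) :=
    locallyIso_of_rank_eq (fun p hp ↦ hE.locFree p fun h ↦ hp h.ge)
      fun p hp ↦ hE.rank2 p fun h ↦ hp h.ge
  obtain ⟨t, rfl⟩ := Nat.exists_eq_add_of_le' ht1
  obtain ⟨f, g, h_exact, hf, hg⟩ := wedge2_cohomology_sequence_general (irrel_ne_bot K n)
    (fun _ ↦ subsingleton_localCoh_irrel K n) hβα hαinj (powSaturation_range_eq_top hβsurj)
    (ker_le_powSaturation_bot hu_ker) (powSaturation_range_eq_top hu_coker) hE2 ht1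
    (by omega : t + 2 + 2 ≤ n)
  exact ⟨f, g, h_exact, hf, fun h ↦ hg (by omega)⟩
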